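/- arXiv:1109.2939 — 3 statements merged into one kernel-verified Lean document; each statement's English description precedes it below -/
import Mathlib

section
/- Let L be an r×m integer matrix of full rank r that is invariant, i.e. L𝟙 = 0 where 𝟙 = (1, 1, …, 1). Then for every α > 0 there exists c = c(α, L) > 0 such that every Borel measurable set A ⊆ T = ℝ/ℤ with μ_T(A) ≥ α satisfies S_L(A) ≥ c. -/
open MeasureTheory Set

noncomputable section

/-- The circle group `𝕋 = ℝ/ℤ`, with its normalized Haar (probability) measure `volume`. -/
abbrev 𝕋 : Type := AddCircle (1 : ℝ)

/-- The group homomorphism `x ↦ Lx` induced by an integer matrix `L`. -/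
def Lhom {r m : ℕ} (L : Matrix (Fin r) (Fin m) ℤ) (G : Type*) [AddCommGroup G] :
    (Fin m → G) →+ (Fin r → G) where
  toFun x := fun i => ∑ j, L i j • x j
  map_zero' := by ext i; simp
  map_add' x y := by ext i; simp [smul_add, Finset.sum_add_distrib]

/-- `ker_𝕋 L`, the closed subgroup `{x ∈ 𝕋^m : Lx = 0}` of `𝕋^m`. -/
def kerT {r m : ℕ} (L : Matrix (Fin r) (Fin m) ℤ) : AddSubgroup (Fin m → 𝕋) :=
  (Lhom L 𝕋).ker

/-!
Let `K` be the kernel of `L` on the circle. Fix a large `n` and choose `x ∈ Kⁿ` at random. The sum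
`∑ j, (x j)_(w j)` attached to a word `w : Fin n → Fin m` is uniformly distributed on the circle, so
the expected density of the set of words whose sum lies in `A` is at least `α`. If this density is
at least `α / 2`, then by the density Hales–Jewett theorem these words contain a combinatorial line.
Since `L` is invariant, constant vectors lie in `K`, hence the `m` sums along a fixed line are the
coordinates of an element of `K`, which is again uniformly distributed. A union bound over the
lines, whose number depends only on `α` and `m`, gives the lower bound.

The density Hales–Jewett theorem is proved by induction on the alphabet. Let `δ` be the limiting
density of the densest line-free sets over `Option α`, and suppose that `δ > 0`. Let `A` be a
line-free set of long words of density at least `δ`. For every prefix of a fixed length, the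
suffixes that complete it to a word of `A` have density about `δ`, and the theorem for `α` provides
a subspace `V` of prefixes such that on average over the suffixes, a positive proportion `E` of the
points `x` of `V` has the property that replacing the letter `none` of `x` with any letter of `α`
yields a word of `A`. A point of `E` that lies in `A` itself cannot contain the letter `none`, as
`A` would contain a line, so `A` is negligible on `E`. But `E` is an intersection of sets that are
insensitive to exchanging `none` and one letter, so the theorem for `α` decomposes its complement,
up to a small error, into subspaces, on each of which `A` has density at most about `δ`. Hence on
average the density of `A` on `V` drops below `δ` by a definite amount, a contradiction.
-/

open Combinatorics (Line)
open Filter Function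
open scoped BigOperators Topology

/-! ### Densities in finite types -/

lemma le_add_sum_indicator_of_forall_exists {Y P : Type*} [Fintype P] {f : Y → ℝ}
    (hf : ∀ y, f y ≤ 1) {R : P → Set Y} {δ : ℝ} (hδ : 0 ≤ δ)
    (hR : ∀ y, δ ≤ f y → ∃ p, y ∈ R p) (y : Y) :
    f y ≤ δ + ∑ p, (R p).indicator 1 y := by
  have hnonneg : ∀ p, 0 ≤ (R p).indicator (1 : Y → ℝ) y := fun p =>
    indicator_nonneg (fun _ _ => zero_le_one) y
  rcases le_total δ (f y) with hy | hy
  · obtain ⟨p, hp⟩ := hR y hy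
    calc f y ≤ (R p).indicator 1 y := by simpa [hp] using hf y
      _ ≤ ∑ p, (R p).indicator 1 y :=
        Finset.single_le_sum (fun p _ => hnonneg p) (Finset.mem_univ p)
      _ ≤ δ + ∑ p, (R p).indicator 1 y := le_add_of_nonneg_left hδ
  · exact hy.trans (le_add_of_nonneg_right (Finset.sum_nonneg fun p _ => hnonneg p))

section Density

variable {X Y Z P : Type*} [Fintype X] [Fintype Y] [Fintype Z]

/-- The density of a subset of a finite type, i.e. its measure under the uniform probability
distribution. It is `0` on an empty type. -/
def density (A : Set X) : ℝ := 𝔼 x, A.indicator 1 x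

lemma density_nonneg (A : Set X) : 0 ≤ density A :=
  Finset.expect_nonneg fun _ _ => indicator_nonneg (fun _ _ => zero_le_one) _

lemma density_le_one (A : Set X) : density A ≤ 1 := by
  cases isEmpty_or_nonempty X
  · simp [density]
  · exact Finset.expect_le Finset.univ_nonempty fun _ _ =>
      indicator_apply_le' (fun _ => le_rfl) fun _ => zero_le_one

lemma nonempty_of_density_pos {A : Set X} (h : 0 < density A) : A.Nonempty := by
  by_contra hA
  simp [density, not_nonempty_iff_eq_empty.1 hA] at h

lemma density_preimage_equiv (e : X ≃ Y) (A : Set Y) : density (e ⁻¹' A) = density A :=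
  Fintype.expect_equiv e _ _ fun _ => rfl

lemma density_prod (A : Set (X × Y)) : density A = 𝔼 x, density (Prod.mk x ⁻¹' A) := by
  simp only [density, ← Finset.univ_product_univ]
  exact Finset.expect_product _ _ _

lemma expect_density_comm (A : X → Set Y) :
    𝔼 x, density (A x) = 𝔼 y, density {x | y ∈ A x} :=
  Finset.expect_comm _ _ _

lemma expect_indicator_le_density {f : X → ℝ} (hf : ∀ x, f x ≤ 1) (A : Set X) :
    𝔼 x, A.indicator f x ≤ density A :=
  Finset.expect_le_expect fun x _ => indicator_le_indicator (hf x)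

lemma expect_indicator_add_compl (A : Set X) (f : X → ℝ) :
    𝔼 x, A.indicator f x + 𝔼 x, Aᶜ.indicator f x = 𝔼 x, f x := by
  rw [← Finset.expect_add_distrib]
  exact Finset.expect_congr rfl fun x _ => congrFun (indicator_self_add_compl A f) x

lemma expect_indicator_sdiff_add {A B : Set X} (h : B ⊆ A) (f : X → ℝ) :
    𝔼 x, (A \ B).indicator f x + 𝔼 x, B.indicator f x = 𝔼 x, A.indicator f x := by
  rw [← Finset.expect_add_distrib]
  refine Finset.expect_congr rfl fun x _ => ?_
  rw [indicator_sdiff h]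
  exact sub_add_cancel _ _

lemma density_sdiff_add {A B : Set X} (h : B ⊆ A) : density (A \ B) + density B = density A :=
  expect_indicator_sdiff_add h 1

lemma le_card_mul_expect {f : X → ℝ} (hf : ∀ x, 0 ≤ f x) (x : X) :
    f x ≤ Fintype.card X * 𝔼 y, f y := by
  have := Nonempty.intro x
  rw [Fintype.expect_eq_sum_div_card, mul_div_cancel₀ _ (by simp [Fintype.card_ne_zero])]
  exact Finset.single_le_sum (fun y _ => hf y) (Finset.mem_univ x)

lemma expect_indicator_range {φ : Z → X} (hφ : Injective φ) (f : X → ℝ) :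
    𝔼 x, (range φ).indicator f x
      = (Fintype.card Z / Fintype.card X : ℝ) * 𝔼 z, f (φ z) := by
  classical
  have hsum : ∑ x, (range φ).indicator f x = ∑ z, f (φ z) := by
    rw [← Finset.sum_image (g := φ) hφ.injOn, ← Finset.sum_indicator_subset f
      (Finset.subset_univ _), Finset.coe_image, Finset.coe_univ, image_univ]
  cases isEmpty_or_nonempty Z
  · simp
  · rw [Fintype.expect_eq_sum_div_card, Fintype.expect_eq_sum_div_card, hsum]
    have : (Fintype.card Z : ℝ) ≠ 0 := by simp [Fintype.card_ne_zero]
    field_simp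

lemma expect_le_of_expect_comp_le {φ : Z → X} (hφ : Injective φ) {f : X → ℝ} {a b : ℝ}
    (hb : ∀ x, f x ≤ b) (ha : 𝔼 z, f (φ z) ≤ a) [Nonempty Z] :
    𝔼 x, f x ≤ (Fintype.card Z / Fintype.card X) * a
      + (1 - Fintype.card Z / Fintype.card X) * b := by
  have : Nonempty X := ‹Nonempty Z›.map φ
  have hrange : 𝔼 x, (range φ).indicator (fun x => b - f x) x ≤ 𝔼 x, (b - f x) :=
    Finset.expect_le_expect fun x _ =>
      indicator_le_self' (fun x _ => sub_nonneg.2 (hb x)) x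
  rw [expect_indicator_range hφ, Finset.expect_sub_distrib, Finset.expect_sub_distrib,
    Fintype.expect_const, Fintype.expect_const] at hrange
  have := mul_le_mul_of_nonneg_left ha
    (by positivity : (0 : ℝ) ≤ Fintype.card Z / Fintype.card X)
  linarith

lemma exists_le_density_of_forall_exists [Finite P] {f : Y → ℝ} (hf : ∀ y, f y ≤ 1)
    {R : P → Set Y} {δ θ : ℝ} (hδ : 0 ≤ δ) (hθ : 0 < θ) (h : δ + θ ≤ 𝔼 y, f y)
    (hR : ∀ y, δ ≤ f y → ∃ p, y ∈ R p) : ∃ p, θ / (Nat.card P + 1) ≤ density (R p) := by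
  have := Fintype.ofFinite P
  have : Nonempty Y := by
    by_contra hY
    rw [not_nonempty_iff] at hY
    simp only [Finset.univ_eq_empty, Finset.expect_empty] at h
    linarith
  have hsum : θ ≤ ∑ p, density (R p) := by
    have hle : 𝔼 y, f y ≤ 𝔼 y, (δ + ∑ p, (R p).indicator 1 y) :=
      Finset.expect_le_expect fun y _ => le_add_sum_indicator_of_forall_exists hf hδ hR y
    rw [Finset.expect_add_distrib, Fintype.expect_const, Finset.expect_sum_comm] at hle
    simp only [density]
    linarith
  by_contra! hcon
  have hle : ∑ p, density (R p) ≤ Nat.card P * (θ / (Nat.card P + 1)) := by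
    simpa only [nsmul_eq_mul, Finset.card_univ, Nat.card_eq_fintype_card] using
      Finset.sum_le_card_nsmul Finset.univ _ _ fun p _ => (hcon p).le
  have hcancel : (Nat.card P + 1) * (θ / (Nat.card P + 1)) = θ := by field_simp
  have hpos : 0 < θ / (Nat.card P + 1) := by positivity
  linarith

end Density

/-! ### Combinatorial subspaces -/

section Words

variable {α β : Type*} {d m n : ℕ}

lemma eventually_atTop_of_add_left {p : ℕ → Prop} (m : ℕ) (h : ∀ᶠ n in atTop, p (m + n)) :
    ∀ᶠ n in atTop, p n := by
  rw [← map_add_atTop_eq_nat m, eventually_map]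
  simpa only [add_comm] using h

lemma expect_append [Fintype α] (f : (Fin (m + n) → α) → ℝ) :
    𝔼 u, f u = 𝔼 x, 𝔼 y, f (Fin.append x y) := by
  rw [← Fintype.expect_equiv (Fin.appendEquiv m n) (fun p => f (Fin.append p.1 p.2)) f
    fun _ => rfl, ← Finset.univ_product_univ]
  exact Finset.expect_product' _ _ fun x y => f (Fin.append x y)

lemma density_append [Fintype α] (A : Set (Fin (m + n) → α)) :
    density A = 𝔼 x, density (Fin.append x ⁻¹' A) :=
  expect_append _

lemma expect_cons [Fintype α] (f : (Fin (n + 1) → α) → ℝ) :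
    𝔼 u, f u = 𝔼 a, 𝔼 u, f (Fin.cons a u) := by
  rw [← Fintype.expect_equiv (Fin.consEquiv fun _ => α) (fun p => f (Fin.cons p.1 p.2)) f
    fun _ => rfl, ← Finset.univ_product_univ]
  exact Finset.expect_product' _ _ fun a u => f (Fin.cons a u)

/-- The `d`-dimensional combinatorial subspaces of the words of length `n` over `α`. -/
abbrev CombSubspace (α : Type*) (d n : ℕ) : Type _ := Combinatorics.Subspace (Fin d) α (Fin n)

instance finite_combSubspace [Finite α] : Finite (CombSubspace α d n) :=
  Finite.of_injective (fun σ => σ.idxFun) fun _ _ h => Combinatorics.Subspace.ext h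

instance finite_line {ι : Type*} [Finite α] [Finite ι] : Finite (Line α ι) :=
  Finite.of_injective (fun l => l.idxFun) fun _ _ h => Line.ext h

namespace CombSubspace

lemma coe_injective_of_proper (σ : CombSubspace α d n) : Injective σ := by
  intro x y hxy
  ext j
  obtain ⟨i, hi⟩ := σ.proper j
  simpa only [Combinatorics.Subspace.apply_inr hi] using congrFun hxy i

/-- The subspace consisting of a single word. -/
def singleton (u : Fin n → α) : CombSubspace α 0 n where
  idxFun i := .inl (u i)
  proper j := j.elim0

lemma singleton_apply (u : Fin n → α) (x : Fin 0 → α) : singleton u x = u := rfl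

/-- The subspace of `σ` with parameter subspace `τ`. -/
def comp (σ : CombSubspace α m n) (τ : CombSubspace α d m) : CombSubspace α d n where
  idxFun i := (σ.idxFun i).elim .inl τ.idxFun
  proper j := by
    obtain ⟨k, hk⟩ := τ.proper j
    obtain ⟨i, hi⟩ := σ.proper k
    exact ⟨i, by simp [hi, hk]⟩

lemma comp_apply (σ : CombSubspace α m n) (τ : CombSubspace α d m) (x : Fin d → α) :
    σ.comp τ x = σ (τ x) := by
  ext i
  rcases h : σ.idxFun i with a | j <;> simp [comp, Combinatorics.Subspace.apply_def, h]

/-- The line contained in `σ` whose parameters run along the line `l`. -/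
def compLine (σ : CombSubspace α d n) (l : Line α (Fin d)) : Line α (Fin n) where
  idxFun i := (σ.idxFun i).elim some l.idxFun
  proper := by
    obtain ⟨j, hj⟩ := l.proper
    obtain ⟨i, hi⟩ := σ.proper j
    exact ⟨i, by simp [hi, hj]⟩

lemma compLine_apply (σ : CombSubspace α d n) (l : Line α (Fin d)) (a : α) :
    σ.compLine l a = σ (l a) := by
  ext i
  rcases h : σ.idxFun i with b | j <;> simp [compLine, Combinatorics.Subspace.apply_def, h]

/-- Change of alphabet, applied to the constant letters of a subspace. -/
def map (f : α → β) (σ : CombSubspace α d n) : CombSubspace β d n where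
  idxFun i := (σ.idxFun i).map f id
  proper j := by
    obtain ⟨i, hi⟩ := σ.proper j
    exact ⟨i, by simp [hi]⟩

lemma map_apply (f : α → β) (σ : CombSubspace α d n) (x : Fin d → α) :
    σ.map f (f ∘ x) = f ∘ σ x := by
  ext i
  rcases h : σ.idxFun i with a | j <;> simp [map, Combinatorics.Subspace.apply_def, h]

/-- The words of length `m + n` with prefix `x`. -/
def withPrefix (x : Fin m → α) : CombSubspace α n (m + n) where
  idxFun := Fin.append (fun i => .inl (x i)) .inr
  proper j := ⟨Fin.natAdd m j, by simp⟩

lemma coe_withPrefix (x : Fin m → α) : ⇑(withPrefix (n := n) x) = Fin.append x := by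
  ext y i
  refine Fin.addCases (fun i => ?_) (fun i => ?_) i <;>
    simp [withPrefix, Combinatorics.Subspace.apply_def]

/-- The words of length `m + n` with suffix `y`. -/
def withSuffix (y : Fin n → α) : CombSubspace α m (m + n) where
  idxFun := Fin.append .inr fun i => .inl (y i)
  proper j := ⟨Fin.castAdd n j, by simp⟩

lemma withSuffix_apply (x : Fin m → α) (y : Fin n → α) :
    withSuffix y x = Fin.append x y := by
  ext i
  refine Fin.addCases (fun i => ?_) (fun i => ?_) i <;>
    simp [withSuffix, Combinatorics.Subspace.apply_def]

/-- The subspace of the words `a :: w` with `w` in `σ`. -/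
def consLetter (a : α) (σ : CombSubspace α d n) : CombSubspace α d (n + 1) where
  idxFun := Fin.cons (.inl a) σ.idxFun
  proper j := by
    obtain ⟨i, hi⟩ := σ.proper j
    exact ⟨i.succ, by simpa using hi⟩

lemma consLetter_apply (a : α) (σ : CombSubspace α d n) (x : Fin d → α) :
    consLetter a σ x = Fin.cons a (σ x) := by
  ext i
  refine Fin.cases ?_ (fun i => ?_) i <;> simp [consLetter, Combinatorics.Subspace.apply_def]

/-- The subspace of the words `a :: w` with `a` arbitrary and `w` in `σ`. -/
def consVar (σ : CombSubspace α d n) : CombSubspace α (d + 1) (n + 1) where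
  idxFun := Fin.cons (.inr 0) fun i => (σ.idxFun i).map id Fin.succ
  proper j := by
    refine Fin.cases ⟨0, rfl⟩ (fun j => ?_) j
    obtain ⟨i, hi⟩ := σ.proper j
    exact ⟨i.succ, by simp [hi]⟩

lemma consVar_apply (σ : CombSubspace α d n) (a : α) (x : Fin d → α) :
    σ.consVar (Fin.cons a x) = Fin.cons a (σ x) := by
  ext i
  refine Fin.cases ?_ (fun i => ?_) i
  · simp [consVar, Combinatorics.Subspace.apply_def]
  · rcases h : σ.idxFun i <;> simp [consVar, Combinatorics.Subspace.apply_def, h]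

/-- The product of a subspace and a line; the parameter of the line is the variable `0`. -/
def prodLine (σ : CombSubspace α d m) (l : Line α (Fin n)) : CombSubspace α (d + 1) (m + n) where
  idxFun := Fin.append (fun i => (σ.idxFun i).map id Fin.succ)
    fun i => (l.idxFun i).elim (.inr 0) .inl
  proper j := by
    refine Fin.cases ?_ (fun j => ?_) j
    · obtain ⟨i, hi⟩ := l.proper
      exact ⟨Fin.natAdd m i, by simp [hi]⟩
    · obtain ⟨i, hi⟩ := σ.proper j
      exact ⟨Fin.castAdd n i, by simp [hi]⟩

lemma prodLine_apply (σ : CombSubspace α d m) (l : Line α (Fin n)) (x : Fin (d + 1) → α) :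
    σ.prodLine l x = Fin.append (σ (Fin.tail x)) (l (x 0)) := by
  ext i
  refine Fin.addCases (fun i => ?_) (fun i => ?_) i
  · rcases h : σ.idxFun i <;> simp [prodLine, Combinatorics.Subspace.apply_def, h, Fin.tail]
  · rcases h : l.idxFun i <;> simp [prodLine, Combinatorics.Subspace.apply_def, h]

end CombSubspace

end Words

section Cells

variable {Q Λ : Type*} [Fintype Q] [Fintype Λ] [Nonempty Λ]

-- Split off the first letter. On average over `Λ` it can serve as an additional variable, which
-- leaves `d` variables to be found; a letter outside `Λ` is kept fixed.
lemma expect_le_of_forall_combSubspace (e : Λ ↪ Q) {s : ℝ} (hs : 0 ≤ s) :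
    ∀ (n d : ℕ) (f : (Fin n → Q) → ℝ), (∀ u, f u ≤ 1) →
      (∀ σ : CombSubspace Q d n, 𝔼 x : Fin d → Λ, f (σ (e ∘ x)) ≤ s) →
      𝔼 u, f u ≤ s + 2 ^ d * (1 - Fintype.card Λ / Fintype.card Q / 2) ^ n := by
  have : Nonempty Q := ‹Nonempty Λ›.map e
  set c : ℝ := Fintype.card Λ / Fintype.card Q with hc
  have hc1 : c ≤ 1 :=
    div_le_one_of_le₀ (mod_cast Fintype.card_le_of_embedding e) (Nat.cast_nonneg _)
  intro n
  induction n with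
  | zero =>
    intro d f hf _
    have hpow : (1 : ℝ) ≤ 2 ^ d := one_le_pow₀ one_le_two
    have hle : 𝔼 u, f u ≤ 1 := Finset.expect_le Finset.univ_nonempty fun u _ => hf u
    simp only [pow_zero]
    linarith
  | succ n ih =>
    intro d f hf h
    cases d with
    | zero =>
      have hle : 𝔼 u, f u ≤ s := Finset.expect_le Finset.univ_nonempty fun u _ => by
        simpa [CombSubspace.singleton_apply] using h (.singleton u)
      have : (0 : ℝ) ≤ 2 ^ 0 * (1 - c / 2) ^ (n + 1) :=
        mul_nonneg (by norm_num) (pow_nonneg (by linarith) _)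
      linarith
    | succ d =>
      have hfixed : ∀ a, 𝔼 u, f (Fin.cons a u) ≤ s + 2 ^ (d + 1) * (1 - c / 2) ^ n := by
        refine fun a => ih (d + 1) _ (fun u => hf _) fun σ => ?_
        simpa only [CombSubspace.consLetter_apply] using h (.consLetter a σ)
      have hfree : 𝔼 a, 𝔼 u, f (Fin.cons (e a) u) ≤ s + 2 ^ d * (1 - c / 2) ^ n := by
        rw [Finset.expect_comm]
        refine ih d _ (fun u => Finset.expect_le Finset.univ_nonempty fun _ _ => hf _) fun σ => ?_
        have hcons (a : Λ) (x : Fin d → Λ) :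
            σ.consVar (e ∘ Fin.cons a x) = Fin.cons (e a) (σ (e ∘ x)) := by
          rw [← CombSubspace.consVar_apply, ← Fin.comp_cons]
        have hσ := h σ.consVar
        rw [expect_cons, Finset.expect_comm] at hσ
        simpa only [hcons] using hσ
      rw [expect_cons]
      refine (expect_le_of_expect_comp_le e.injective hfixed hfree).trans (le_of_eq ?_)
      rw [← hc]
      ring

lemma eventually_exists_combSubspace_le_expect (Q Λ : Type*) [Fintype Q] [Fintype Λ] [Nonempty Λ]
    (d : ℕ) {s ε : ℝ} (hs : 0 ≤ s) (hε : 0 < ε) :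
    ∀ᶠ n in atTop, ∀ (e : Λ ↪ Q) (f : (Fin n → Q) → ℝ), (∀ u, f u ≤ 1) → s + ε ≤ 𝔼 u, f u →
      ∃ σ : CombSubspace Q d n, s ≤ 𝔼 x : Fin d → Λ, f (σ (e ∘ x)) := by
  rcases isEmpty_or_nonempty (Λ ↪ Q) with h | ⟨⟨e₀⟩⟩
  · exact .of_forall fun n e => h.elim e
  have : Nonempty Q := ‹Nonempty Λ›.map e₀
  set c : ℝ := Fintype.card Λ / Fintype.card Q
  have hc0 : 0 < c := div_pos (mod_cast Fintype.card_pos) (mod_cast Fintype.card_pos)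
  have hc1 : c ≤ 1 :=
    div_le_one_of_le₀ (mod_cast Fintype.card_le_of_embedding e₀) (Nat.cast_nonneg _)
  have hlim : Tendsto (fun n => (2 : ℝ) ^ d * (1 - c / 2) ^ n) atTop (𝓝 0) := by
    have hpow : Tendsto (fun n => (1 - c / 2) ^ n) atTop (𝓝 0) :=
      tendsto_pow_atTop_nhds_zero_of_lt_one (by linarith) (by linarith)
    simpa only [mul_zero] using hpow.const_mul (2 ^ d)
  filter_upwards [hlim.eventually_lt_const hε] with n hn e f hf hmean
  by_contra! hcon
  have := expect_le_of_forall_combSubspace e hs n d f hf fun σ => (hcon σ).le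
  linarith

end Cells

/-! ### Insensitive sets -/

/-- The density Hales–Jewett property of a finite alphabet `α`: a set of words of positive density
contains a combinatorial line, provided that the words are long enough. -/
def DensityHalesJewett (α : Type*) [Fintype α] : Prop :=
  ∀ δ : ℝ, 0 < δ → ∀ᶠ n in atTop, ∀ A : Set (Fin n → α), δ ≤ density A →
    ∃ l : Line α (Fin n), ∀ a, l a ∈ A

section Insensitive

variable {α : Type*} {d m n : ℕ}

/-- Replace every letter `none` by `some a`. -/
def fill (a : α) (x : Fin n → Option α) : Fin n → Option α := fun i => some ((x i).getD a)

/-- A set of words is `a`-insensitive if membership is not affected by exchanging the letters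
`none` and `some a`. -/
def Insensitive (a : α) (D : Set (Fin n → Option α)) : Prop := fill a ⁻¹' D = D

lemma insensitive_preimage_fill (a : α) (A : Set (Fin n → Option α)) :
    Insensitive a (fill a ⁻¹' A) := rfl

/-- The product of a set of prefixes and a set of suffixes. -/
def appendSet (B : Set (Fin m → α)) (Y : Set (Fin n → α)) : Set (Fin (m + n) → α) :=
  {w | (fun i => w (Fin.castAdd n i)) ∈ B ∧ (fun j => w (Fin.natAdd m j)) ∈ Y}

lemma append_mem_appendSet {B : Set (Fin m → α)} {Y : Set (Fin n → α)} {x : Fin m → α}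
    {y : Fin n → α} : Fin.append x y ∈ appendSet B Y ↔ x ∈ B ∧ y ∈ Y := by
  simp [appendSet]

lemma indicator_append_appendSet (B : Set (Fin m → α)) (Y : Set (Fin n → α))
    (f : (Fin (m + n) → α) → ℝ) (x : Fin m → α) (y : Fin n → α) :
    (appendSet B Y).indicator f (Fin.append x y)
      = Y.indicator 1 y * B.indicator (fun x => f (Fin.append x y)) x := by
  by_cases hx : x ∈ B <;> by_cases hy : y ∈ Y <;> simp [append_mem_appendSet, hx, hy]

lemma expect_appendSet_range [Fintype α] (U : CombSubspace α d m) (Y : Set (Fin n → α))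
    (f : (Fin (m + n) → α) → ℝ) :
    𝔼 w, (appendSet (range U) Y).indicator f w
      = (Fintype.card (Fin d → α) / Fintype.card (Fin m → α)) *
        𝔼 y, Y.indicator 1 y * 𝔼 x, f (Fin.append (U x) y) := by
  rw [expect_append, Finset.expect_comm, Finset.mul_expect]
  refine Finset.expect_congr rfl fun y _ => ?_
  simp only [indicator_append_appendSet]
  rw [← Finset.mul_expect, expect_indicator_range U.coe_injective_of_proper]
  ring

lemma density_appendSet_range [Fintype α] [Nonempty α] (U : CombSubspace α d m)
    (Y : Set (Fin n → α)) :
    density (appendSet (range U) Y)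
      = (Fintype.card (Fin d → α) / Fintype.card (Fin m → α)) * density Y := by
  rw [density, expect_appendSet_range]
  simp [density]

namespace Insensitive

variable {a : α} {D E : Set (Fin n → Option α)}

protected lemma eq (hD : Insensitive a D) : fill a ⁻¹' D = D := hD

lemma compl (hD : Insensitive a D) : Insensitive a Dᶜ := by
  rw [Insensitive, preimage_compl, hD]

lemma sdiff (hD : Insensitive a D) (hE : Insensitive a E) : Insensitive a (D \ E) := by
  rw [Insensitive, preimage_sdiff, hD, hE]

lemma iInter {ι : Sort*} {D : ι → Set (Fin n → Option α)} (hD : ∀ i, Insensitive a (D i)) :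
    Insensitive a (⋂ i, D i) := by
  rw [Insensitive, preimage_iInter, iInter_congr hD]

lemma preimage (hD : Insensitive a D) (σ : CombSubspace (Option α) d n) :
    Insensitive a (σ ⁻¹' D) := by
  have hσ : fill a ∘ σ ∘ fill a = fill a ∘ σ := by
    ext1 x
    ext1 i
    rcases h : σ.idxFun i with b | j <;> simp [fill, Combinatorics.Subspace.apply_def, h]
  calc fill a ⁻¹' (σ ⁻¹' D) = (fill a ∘ σ ∘ fill a) ⁻¹' D := by simp only [preimage_comp, hD.eq]
    _ = σ ⁻¹' D := by rw [hσ, preimage_comp, hD.eq]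

lemma preimage_append {D : Set (Fin (m + n) → Option α)} (hD : Insensitive a D)
    (x : Fin m → Option α) : Insensitive a (Fin.append x ⁻¹' D) :=
  CombSubspace.coe_withPrefix x ▸ hD.preimage (.withPrefix x)

lemma preimage_append_right {D : Set (Fin (m + n) → Option α)} (hD : Insensitive a D)
    (y : Fin n → Option α) : Insensitive a {x | Fin.append x y ∈ D} := by
  have hy : {x | Fin.append x y ∈ D} = CombSubspace.withSuffix y ⁻¹' D := by
    ext x
    rw [mem_preimage, CombSubspace.withSuffix_apply]
    rfl
  exact hy ▸ hD.preimage _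

lemma append_preimage_appendSet {Y : Set (Fin n → Option α)}
    (hY : Insensitive a Y) (B : Set (Fin m → Option α)) (x : Fin m → Option α) :
    Insensitive a (Fin.append x ⁻¹' appendSet B Y) := by
  have hfibre : Fin.append x ⁻¹' appendSet B Y = {y | x ∈ B ∧ y ∈ Y} := by
    ext y
    exact append_mem_appendSet
  by_cases hx : x ∈ B
  · simpa only [hfibre, hx, true_and, ofPred_mem_eq] using hY
  · simp only [hfibre, hx, false_and]
    rfl

end Insensitive

end Insensitive

section InsensitiveSubspace

variable {α : Type*} [Fintype α]

namespace DensityHalesJewett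

lemma eventually_exists_combSubspace (h : DensityHalesJewett α) (d : ℕ) {δ : ℝ} (hδ : 0 < δ) :
    ∀ᶠ n in atTop, ∀ A : Set (Fin n → α), δ ≤ density A →
      ∃ σ : CombSubspace α d n, ∀ x, σ x ∈ A := by
  induction d generalizing δ with
  | zero =>
    refine .of_forall fun n A hA => ?_
    obtain ⟨u, hu⟩ := nonempty_of_density_pos (hδ.trans_le hA)
    exact ⟨.singleton u, fun _ => hu⟩
  | succ d ih =>
    obtain ⟨m, hm⟩ := (ih (half_pos hδ)).exists
    refine eventually_atTop_of_add_left m ?_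
    filter_upwards [h (δ / 2 / (Nat.card (CombSubspace α d m) + 1)) (by positivity)] with n hn A hA
    rw [density_append, expect_density_comm] at hA
    obtain ⟨σ, hσ⟩ := exists_le_density_of_forall_exists
      (f := fun y => density {x | Fin.append x y ∈ A}) (fun y => density_le_one _)
      (R := fun σ : CombSubspace α d m => {y | ∀ x, Fin.append (σ x) y ∈ A})
      (half_pos hδ).le (half_pos hδ) (by rwa [add_halves]) fun y hy => hm _ hy
    obtain ⟨l, hl⟩ := hn _ hσ
    exact ⟨σ.prodLine l, fun x => by rw [CombSubspace.prodLine_apply]; exact hl _ _⟩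

lemma eventually_exists_combSubspace_of_insensitive (h : DensityHalesJewett α) [Nonempty α]
    (d : ℕ) {δ : ℝ} (hδ : 0 < δ) :
    ∀ᶠ n in atTop, ∀ (a : α) (D : Set (Fin n → Option α)), Insensitive a D → δ ≤ density D →
      ∃ σ : CombSubspace (Option α) d n, ∀ x, σ x ∈ D := by
  obtain ⟨m, hm⟩ := (h.eventually_exists_combSubspace d (half_pos hδ)).exists
  filter_upwards [eventually_exists_combSubspace_le_expect (Option α) α m (half_pos hδ).le
    (half_pos hδ)] with n hn a D hD hdens
  obtain ⟨σ, hσ⟩ := hn .some (D.indicator 1)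
    (fun _ => indicator_apply_le' (fun _ => le_rfl) fun _ => zero_le_one) (by rwa [add_halves])
  obtain ⟨τ, hτ⟩ := hm {x | σ (some ∘ x) ∈ D} hσ
  refine ⟨σ.comp (τ.map some), fun x => ?_⟩
  have hins := ((hD.preimage σ).preimage (τ.map some)).eq
  rw [CombSubspace.comp_apply]
  change x ∈ (τ.map some) ⁻¹' (σ ⁻¹' D)
  rw [← hins]
  have hfill : fill a x = some ∘ fun i => (x i).getD a := rfl
  rw [mem_preimage, mem_preimage, hfill, CombSubspace.map_apply]
  exact hτ _

lemma exists_appendSet_subset (h : DensityHalesJewett α) [Nonempty α] (d : ℕ) {β : ℝ}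
    (hβ : 0 < β) :
    ∃ m, ∃ η : ℝ, 0 < η ∧ η ≤ 1 ∧ ∀ (n : ℕ) (a : α) (D : Set (Fin (m + n) → Option α)),
      Insensitive a D → β ≤ density D → ∃ (U : CombSubspace (Option α) d m)
        (Y : Set (Fin n → Option α)), Insensitive a Y ∧ appendSet (range U) Y ⊆ D ∧
          η ≤ density (appendSet (range U) Y) := by
  obtain ⟨m, hm⟩ :=
    (h.eventually_exists_combSubspace_of_insensitive d (half_pos hβ)).exists
  set θ : ℝ := β / 2 / (Nat.card (CombSubspace (Option α) d m) + 1)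
  set c : ℝ := Fintype.card (Fin d → Option α) / Fintype.card (Fin m → Option α)
  have hc : 0 < c := div_pos (mod_cast Fintype.card_pos) (mod_cast Fintype.card_pos)
  have hθ : 0 < θ := by positivity
  refine ⟨m, min 1 (c * θ), lt_min one_pos (mul_pos hc hθ), min_le_left _ _,
    fun n a D hD hdens => ?_⟩
  rw [density_append, expect_density_comm] at hdens
  obtain ⟨U, hU⟩ := exists_le_density_of_forall_exists
    (f := fun y => density {x | Fin.append x y ∈ D}) (fun y => density_le_one _)
    (R := fun σ : CombSubspace (Option α) d m => {y | ∀ x, Fin.append (σ x) y ∈ D})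
    (half_pos hβ).le (half_pos hβ) (by rwa [add_halves]) fun y hy =>
      hm a _ (hD.preimage_append_right y) hy
  refine ⟨U, {y | ∀ x, Fin.append (U x) y ∈ D}, ?_, ?_, ?_⟩
  · rw [ofPred_forall]
    exact .iInter fun x => hD.preimage_append _
  · rintro w ⟨⟨x, hx⟩, hY⟩
    rw [← Fin.append_castAdd_natAdd (f := w), ← hx]
    exact hY x
  · rw [density_appendSet_range]
    exact (min_le_right _ _).trans (mul_le_mul_of_nonneg_left hU hc.le)

end DensityHalesJewett

end InsensitiveSubspace

section NonposAverages

variable {α : Type*} [Fintype α] {d m n : ℕ}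

/-- The average of `f` over every `d`-dimensional combinatorial subspace is nonpositive. -/
def NonposAverages (d : ℕ) (f : (Fin n → α) → ℝ) : Prop :=
  ∀ σ : CombSubspace α d n, 𝔼 x, f (σ x) ≤ 0

namespace NonposAverages

lemma comp {f : (Fin n → α) → ℝ} (hf : NonposAverages d f) (σ : CombSubspace α m n) :
    NonposAverages d fun x => f (σ x) := fun τ => by
  simpa only [CombSubspace.comp_apply] using hf (σ.comp τ)

lemma comp_append {f : (Fin (m + n) → α) → ℝ} (hf : NonposAverages d f) (x : Fin m → α) :
    NonposAverages d fun y => f (Fin.append x y) := by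
  simpa only [CombSubspace.coe_withPrefix] using hf.comp (.withPrefix x)

lemma expect_appendSet_range_nonpos {f : (Fin (m + n) → α) → ℝ} (hf : NonposAverages d f)
    (U : CombSubspace α d m) (Y : Set (Fin n → α)) :
    𝔼 w, (appendSet (range U) Y).indicator f w ≤ 0 := by
  have hy (y : Fin n → α) : 𝔼 x, f (Fin.append (U x) y) ≤ 0 := by
    simpa only [CombSubspace.withSuffix_apply] using hf.comp (.withSuffix y) U
  have hnonneg (y : Fin n → α) : 0 ≤ Y.indicator (1 : (Fin n → α) → ℝ) y :=
    indicator_nonneg (fun _ _ => zero_le_one) y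
  rw [expect_appendSet_range]
  exact mul_nonpos_of_nonneg_of_nonpos (by positivity) <|
    (Finset.expect_le_expect fun y _ =>
      mul_nonpos_of_nonneg_of_nonpos (hnonneg y) (hy y)).trans_eq (Finset.expect_const_zero _)

end NonposAverages

namespace DensityHalesJewett

variable [Nonempty α]

/- Remove the products given by `exists_appendSet_subset` one after the other: `f` has nonpositive
average on each of them, and each removal decreases the density by a definite factor. -/
lemma exists_forall_eventually_expect_indicator_le (h : DensityHalesJewett α) (d : ℕ) {β : ℝ}
    (hβ : 0 < β) :
    ∃ η : ℝ, 0 < η ∧ η ≤ 1 ∧ ∀ J : ℕ, ∀ᶠ n in atTop, ∀ f : (Fin n → Option α) → ℝ,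
      (∀ x, f x ≤ 1) → NonposAverages d f → ∀ (a : α) (D : Set (Fin n → Option α)),
        Insensitive a D → 𝔼 x, D.indicator f x ≤ (1 - η) ^ J * density D + β := by
  obtain ⟨m, η, hη0, hη1, hpeel⟩ := h.exists_appendSet_subset d hβ
  refine ⟨η, hη0, hη1, fun J => ?_⟩
  have hpow (J : ℕ) : 0 ≤ (1 - η) ^ J := pow_nonneg (sub_nonneg.2 hη1) J
  induction J with
  | zero =>
    refine .of_forall fun n f hf _ a D _ => ?_
    have := expect_indicator_le_density hf D
    linarith
  | succ J ih =>
    refine eventually_atTop_of_add_left m ?_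
    filter_upwards [ih] with n hn f hf hfd a D hD
    rcases lt_or_ge (density D) β with hsmall | hlarge
    · have := expect_indicator_le_density hf D
      have := mul_nonneg (hpow (J + 1)) (density_nonneg D)
      linarith
    obtain ⟨U, Y, hY, hsub, hdens⟩ := hpeel n a D hD hlarge
    set P := appendSet (range U) Y
    have hrest : 𝔼 x, (D \ P).indicator f x ≤ (1 - η) ^ J * density (D \ P) + β := by
      rw [expect_append, density_append, Finset.mul_expect,
        ← Fintype.expect_const (ι := Fin m → Option α) β, ← Finset.expect_add_distrib]
      refine Finset.expect_le_expect fun x _ => ?_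
      exact hn (fun y => f (Fin.append x y)) (fun y => hf _) (hfd.comp_append x) a _
        ((hD.preimage_append x).sdiff (hY.append_preimage_appendSet _ x))
    have hsplit := expect_indicator_sdiff_add hsub f
    have hP := hfd.expect_appendSet_range_nonpos U Y
    have hdiff : density (D \ P) ≤ (1 - η) * density D := by
      have := density_sdiff_add hsub
      nlinarith [density_le_one D]
    have := mul_le_mul_of_nonneg_left hdiff (hpow J)
    rw [pow_succ]
    linarith

lemma eventually_expect_indicator_le (h : DensityHalesJewett α) (d : ℕ) {β : ℝ} (hβ : 0 < β) :
    ∀ᶠ n in atTop, ∀ f : (Fin n → Option α) → ℝ, (∀ x, f x ≤ 1) → NonposAverages d f →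
      ∀ (a : α) (D : Set (Fin n → Option α)), Insensitive a D → 𝔼 x, D.indicator f x ≤ β := by
  obtain ⟨η, hη0, hη1, hη⟩ := h.exists_forall_eventually_expect_indicator_le d (half_pos hβ)
  obtain ⟨J, hJ⟩ := exists_pow_lt_of_lt_one (half_pos hβ) (sub_lt_self 1 hη0)
  filter_upwards [hη J] with n hn f hf hfd a D hD
  have hpow : (1 - η) ^ J * density D ≤ (1 - η) ^ J :=
    mul_le_of_le_one_right (pow_nonneg (sub_nonneg.2 hη1) J) (density_le_one D)
  have := hn f hf hfd a D hD
  linarith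

lemma eventually_expect_indicator_compl_iInter_le (h : DensityHalesJewett α) (s : Finset α)
    (d : ℕ) {β : ℝ} (hβ : 0 < β) :
    ∀ᶠ n in atTop, ∀ f : (Fin n → Option α) → ℝ, (∀ x, f x ≤ 1) → NonposAverages d f →
      ∀ D : α → Set (Fin n → Option α), (∀ a, Insensitive a (D a)) →
        𝔼 x, (⋂ a ∈ s, D a)ᶜ.indicator f x ≤ β := by
  classical
  induction s using Finset.induction_on generalizing d β with
  | empty => exact .of_forall fun n f _ _ D _ => by simpa using hβ.le
  | insert a s _ ih =>
    obtain ⟨e, he⟩ := (ih d (β := β / 3) (by positivity)).exists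
    filter_upwards [h.eventually_expect_indicator_le d (β := β / 3) (by positivity),
      h.eventually_expect_indicator_le e (β := β / 3) (by positivity)] with n hn hn' f hf hfd D hD
    set E := ⋂ b ∈ s, D b with hE
    have hsplit : 𝔼 x, (⋂ b ∈ insert a s, D b)ᶜ.indicator f x
        = 𝔼 x, (D a)ᶜ.indicator f x + 𝔼 x, (D a).indicator (Eᶜ.indicator f) x := by
      rw [← Finset.expect_add_distrib, Finset.set_biInter_insert]
      refine Finset.expect_congr rfl fun x _ => ?_
      by_cases hx : x ∈ D a <;> by_cases hxE : x ∈ E <;> simp [hx, hxE, ← hE]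
    have havg : NonposAverages e fun x => Eᶜ.indicator f x - β / 3 := fun σ => by
      have hσ := he (fun x => f (σ x)) (fun x => hf _) (hfd.comp σ) (fun b => σ ⁻¹' D b)
        fun b => (hD b).preimage σ
      simp only [← preimage_iInter, ← preimage_compl] at hσ
      rw [Finset.expect_sub_distrib, Fintype.expect_const, sub_nonpos]
      exact hσ
    have hrest : 𝔼 x, (D a).indicator (fun x => Eᶜ.indicator f x - β / 3) x ≤ β / 3 := by
      refine hn' _ (fun x => ?_) havg a _ (hD a)
      have : Eᶜ.indicator f x ≤ 1 := indicator_apply_le' (fun _ => hf x) fun _ => zero_le_one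
      linarith
    have hshift : 𝔼 x, (D a).indicator (Eᶜ.indicator f) x
        ≤ 𝔼 x, ((D a).indicator (fun x => Eᶜ.indicator f x - β / 3) x + β / 3) := by
      refine Finset.expect_le_expect fun x _ => ?_
      by_cases hx : x ∈ D a
      · simp [hx]
      · simpa [hx] using (by positivity : 0 ≤ β / 3)
    rw [Finset.expect_add_distrib, Fintype.expect_const] at hshift
    have := hn f hf hfd a _ (hD a).compl
    linarith

end DensityHalesJewett

end NonposAverages

/-! ### Line-free sets -/

section LineFree

variable {α : Type*} {d m n : ℕ}

/-- A set of words that contains no combinatorial line. -/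
def LineFree (A : Set (Fin n → α)) : Prop := ∀ l : Line α (Fin n), ∃ a, l a ∉ A

lemma LineFree.preimage {A : Set (Fin n → α)} (hA : LineFree A) (σ : CombSubspace α d n) :
    LineFree (σ ⁻¹' A) := fun l => by
  simpa only [CombSubspace.compLine_apply, mem_preimage] using hA (σ.compLine l)

lemma lineFree_empty [Nonempty α] : LineFree (∅ : Set (Fin n → α)) :=
  fun _ => ⟨Classical.arbitrary α, id⟩

lemma LineFree.ne_none {A : Set (Fin n → Option α)} (hA : LineFree A)
    {w : Fin n → Option α} (hw : w ∈ A) (hfill : ∀ a, fill a w ∈ A) (i : Fin n) :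
    w i ≠ none := fun hi => by
  obtain ⟨b, hb⟩ := hA ⟨fun j => (w j).map some, i, by rw [hi, Option.map_none]⟩
  refine hb ?_
  rcases b with _ | a
  · convert hw
    ext1 j
    rcases hj : w j <;> simp [hj]
  · convert hfill a
    ext1 j
    rcases hj : w j <;> simp [hj, fill]

variable [Fintype α]

variable (α) in
/-- The largest density of a set of words of length `n` that contains no combinatorial line. -/
def maxLineFreeDensity (n : ℕ) : ℝ := ⨆ A : {A : Set (Fin n → α) // LineFree A}, density A.1

variable (α) in
lemma maxLineFreeDensity_nonneg (n : ℕ) : 0 ≤ maxLineFreeDensity α n :=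
  Real.iSup_nonneg fun A => density_nonneg A.1

lemma LineFree.density_le {A : Set (Fin n → α)} (hA : LineFree A) :
    density A ≤ maxLineFreeDensity α n :=
  le_ciSup_of_le (finite_range _).bddAbove (⟨A, hA⟩ : {A // LineFree A}) le_rfl

lemma LineFree.density_append_le {A : Set (Fin (m + n) → α)} (hA : LineFree A) (x : Fin m → α) :
    density (Fin.append x ⁻¹' A) ≤ maxLineFreeDensity α n :=
  CombSubspace.coe_withPrefix x ▸ (hA.preimage (.withPrefix x)).density_le

variable (α) in
/-- The limit of the largest line-free densities; the density Hales–Jewett property is the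
assertion that it vanishes. -/
def limLineFreeDensity : ℝ := ⨅ n, maxLineFreeDensity α n

variable (α) in
lemma bddBelow_range_maxLineFreeDensity : BddBelow (range (maxLineFreeDensity α)) :=
  ⟨0, forall_mem_range.2 (maxLineFreeDensity_nonneg α)⟩

variable (α) in
lemma limLineFreeDensity_nonneg : 0 ≤ limLineFreeDensity α :=
  Real.iInf_nonneg (maxLineFreeDensity_nonneg α)

lemma limLineFreeDensity_le (n : ℕ) : limLineFreeDensity α ≤ maxLineFreeDensity α n :=
  ciInf_le (bddBelow_range_maxLineFreeDensity α) n

variable [Nonempty α]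

variable (α) in
lemma exists_lineFree_density_eq (n : ℕ) :
    ∃ A : Set (Fin n → α), LineFree A ∧ density A = maxLineFreeDensity α n := by
  have : Nonempty {A : Set (Fin n → α) // LineFree A} := ⟨∅, lineFree_empty⟩
  obtain ⟨A, hA⟩ := exists_eq_ciSup_of_finite (f := fun A : {A : Set (Fin n → α) // LineFree A} =>
    density A.1)
  exact ⟨A.1, A.2, hA⟩

variable (α) in
lemma antitone_maxLineFreeDensity : Antitone (maxLineFreeDensity α) := by
  refine antitone_nat_of_succ_le fun n => ?_
  obtain ⟨A, hA, hdens⟩ := exists_lineFree_density_eq α (n + 1)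
  rw [← hdens, density_append, expect_density_comm]
  refine Finset.expect_le Finset.univ_nonempty fun y _ => ?_
  have := (hA.preimage (.withSuffix y)).density_le
  simpa only [preimage, CombSubspace.withSuffix_apply, mem_ofPred_eq] using this

lemma eventually_maxLineFreeDensity_lt {s : ℝ} (hs : limLineFreeDensity α < s) :
    ∀ᶠ n in atTop, maxLineFreeDensity α n < s :=
  (tendsto_atTop_ciInf (antitone_maxLineFreeDensity α)
    (bddBelow_range_maxLineFreeDensity α)).eventually_lt_const hs

lemma DensityHalesJewett.of_limLineFreeDensity_nonpos (h : limLineFreeDensity α ≤ 0) :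
    DensityHalesJewett α := fun δ hδ => by
  filter_upwards [eventually_maxLineFreeDensity_lt (h.trans_lt hδ)] with n hn A hA
  by_contra! hfree
  exact (hA.trans (LineFree.density_le hfree)).not_gt hn

-- All fibres have density at most about the limit and their average is at least the limit, so none
-- of them can be much below it.
lemma eventually_le_density_append (m : ℕ) {γ : ℝ} (hγ : 0 < γ) :
    ∀ᶠ n in atTop, ∀ A : Set (Fin (m + n) → α), LineFree A → limLineFreeDensity α ≤ density A →
      ∀ x, limLineFreeDensity α - γ ≤ density (Fin.append x ⁻¹' A) := by
  set N := Fintype.card (Fin m → α)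
  have hN : (0 : ℝ) < N := mod_cast Fintype.card_pos
  have hlt : limLineFreeDensity α < limLineFreeDensity α + γ / N :=
    lt_add_of_pos_right _ (div_pos hγ hN)
  filter_upwards [eventually_maxLineFreeDensity_lt hlt] with n hn A hA hdens x
  set s := limLineFreeDensity α + γ / N
  have hdeficit := le_card_mul_expect (f := fun x => s - density (Fin.append x ⁻¹' A))
    (fun x => sub_nonneg.2 ((hA.density_append_le x).trans hn.le)) x
  rw [Finset.expect_sub_distrib, Fintype.expect_const, ← density_append] at hdeficit
  have : N * (s - density A) ≤ γ := by
    calc N * (s - density A) ≤ N * (γ / N) := by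
          gcongr
          linarith
      _ = γ := mul_div_cancel₀ γ hN.ne'
  linarith

end LineFree

section DensityDrop

variable {α : Type*} [Fintype α] [Nonempty α]

lemma density_forall_ne_none (n : ℕ) :
    density {x : Fin n → Option α | ∀ i, x i ≠ none}
      = (Fintype.card α / (Fintype.card α + 1) : ℝ) ^ n := by
  have hrange : {x : Fin n → Option α | ∀ i, x i ≠ none}
      = range fun x : Fin n → α => fun i => some (x i) := by
    ext x
    simp only [mem_ofPred_eq, mem_range, funext_iff, Option.ne_none_iff_exists]
    exact Classical.skolem
  have hinj : Injective fun (x : Fin n → α) i => some (x i) :=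
    (Option.some_injective α).comp_left
  rw [hrange, density, expect_indicator_range hinj]
  simp [div_pow]

lemma eventually_density_forall_ne_none_le (α : Type*) [Fintype α] [Nonempty α] {γ : ℝ}
    (hγ : 0 < γ) :
    ∀ᶠ n in atTop, density {x : Fin n → Option α | ∀ i, x i ≠ none} ≤ γ := by
  simp only [density_forall_ne_none]
  refine (tendsto_pow_atTop_nhds_zero_of_lt_one (by positivity) ?_).eventually_le_const hγ
  rw [div_lt_one (by positivity)]
  exact lt_add_one _

-- The function `1_B - (δ + γ)` has nonpositive averages over subspaces of a large fixed dimension.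
-- So its contribution outside `⋂ a, D a` is at most `γ`, and inside this set `B` is negligible.
lemma DensityHalesJewett.eventually_density_le_of_forall_ne_none (h : DensityHalesJewett α)
    {γ : ℝ} (hγ : 0 < γ) :
    ∀ᶠ n in atTop, ∀ B : Set (Fin n → Option α), LineFree B →
      ∀ D : α → Set (Fin n → Option α), (∀ a, Insensitive a (D a)) →
        (∀ x ∈ B, (∀ a, x ∈ D a) → ∀ i, x i ≠ none) →
          density B ≤ limLineFreeDensity (Option α) + 3 * γ
            - limLineFreeDensity (Option α) * density (⋂ a, D a) := by
  set δ := limLineFreeDensity (Option α)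
  have hδ : 0 ≤ δ := limLineFreeDensity_nonneg _
  obtain ⟨d, hd⟩ := (eventually_maxLineFreeDensity_lt (lt_add_of_pos_right δ hγ)).exists
  filter_upwards [h.eventually_expect_indicator_compl_iInter_le Finset.univ d hγ,
    eventually_density_forall_ne_none_le α hγ] with n hn hnone B hB D hD hBD
  set E := ⋂ a, D a
  set S : Set (Fin n → Option α) := {x | ∀ i, x i ≠ none}
  set f : (Fin n → Option α) → ℝ := fun x => B.indicator 1 x - (δ + γ) with hf
  have hB1 (x) : B.indicator (1 : (Fin n → Option α) → ℝ) x ≤ 1 :=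
    indicator_apply_le' (fun _ => le_rfl) fun _ => zero_le_one
  have havg : NonposAverages d f := fun σ => by
    rw [Finset.expect_sub_distrib, Fintype.expect_const, sub_nonpos]
    exact (hB.preimage σ).density_le.trans hd.le
  have hout : 𝔼 x, Eᶜ.indicator f x ≤ γ := by
    have := hn f (fun x => by linarith [hB1 x]) havg D hD
    simpa only [Finset.mem_univ, iInter_true] using this
  have hin : 𝔼 x, E.indicator f x ≤ density S - δ * density E := by
    rw [density, density, Finset.mul_expect, ← Finset.expect_sub_distrib]
    refine Finset.expect_le_expect fun x _ => ?_
    have hS : 0 ≤ S.indicator (1 : (Fin n → Option α) → ℝ) x :=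
      indicator_nonneg (fun _ _ => zero_le_one) x
    by_cases hxE : x ∈ E
    · have hBS : B.indicator (1 : (Fin n → Option α) → ℝ) x ≤ S.indicator 1 x := by
        refine indicator_apply_le' (fun hxB => ?_) fun _ => hS
        have hxS : x ∈ S := hBD x hxB (mem_iInter.1 hxE)
        rw [indicator_of_mem hxS]
      simp only [hxE, indicator_of_mem, hf, Pi.one_apply]
      linarith
    · simpa [hxE] using hS
  have hsum : 𝔼 x, f x = density B - (δ + γ) := by
    rw [Finset.expect_sub_distrib, Fintype.expect_const, density]
  have := expect_indicator_add_compl E f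
  linarith

lemma DensityHalesJewett.eventually_density_preimage_le (h : DensityHalesJewett α)
    {γ : ℝ} (hγ : 0 < γ) :
    ∀ᶠ d in atTop, ∀ (n : ℕ) (A : Set (Fin n → Option α)), LineFree A →
      ∀ V : CombSubspace (Option α) d n,
        density (V ⁻¹' A) ≤ limLineFreeDensity (Option α) + 3 * γ
          - limLineFreeDensity (Option α) * density {x | ∀ a, fill a (V x) ∈ A} := by
  filter_upwards [h.eventually_density_le_of_forall_ne_none hγ] with d hd n A hA V
  have hdrop := hd (V ⁻¹' A) (hA.preimage V) (fun a => V ⁻¹' (fill a ⁻¹' A))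
    (fun a => (insensitive_preimage_fill a A).preimage V) fun x hx hfill j => by
      obtain ⟨i, hi⟩ := V.proper j
      simpa only [Combinatorics.Subspace.apply_inr hi] using hA.ne_none hx hfill i
  rwa [show {x | ∀ a, fill a (V x) ∈ A} = ⋂ a, V ⁻¹' (fill a ⁻¹' A) from ofPred_forall _]

end DensityDrop

section FilledSubspaces

variable {α : Type*} [Fintype α] [Nonempty α]

namespace DensityHalesJewett

lemma exists_line_le_expect (h : DensityHalesJewett α) {δ : ℝ} (hδ : 0 < δ) :
    ∃ m, ∃ θ : ℝ, 0 < θ ∧ ∀ (n : ℕ) (Y : Type*) [Fintype Y] (T : (Fin n → Option α) → Set Y),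
      (∀ x, δ ≤ density (T x)) → ∃ l : Line α (Fin m), θ ≤ 𝔼 u : Fin n → α ⊕ Fin m,
        density (⋂ a, T (fill a (Sum.elim some l.idxFun ∘ u))) := by
  obtain ⟨m, hm⟩ := (h (δ / 2) (half_pos hδ)).exists
  refine ⟨m, δ / 2 / (Nat.card (Line α (Fin m)) + 1), by positivity, fun n Y _ T hT => ?_⟩
  have hline (l : Line α (Fin m)) (u : Fin n → α ⊕ Fin m) (a : α) :
      some ∘ Sum.elim id (l a) ∘ u = fill a (Sum.elim some l.idxFun ∘ u) := by
    ext1 i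
    rcases hi : u i with b | j <;> simp [fill, hi, Line.apply_def]
  have hmean : δ / 2 + δ / 2 ≤ 𝔼 p : (Fin n → α ⊕ Fin m) × Y,
      density {y | p.2 ∈ T (some ∘ Sum.elim id y ∘ p.1)} := by
    rw [← Finset.univ_product_univ, Finset.expect_product, add_halves]
    refine Finset.le_expect Finset.univ_nonempty fun u _ => ?_
    rw [← expect_density_comm fun y => T (some ∘ Sum.elim id y ∘ u)]
    exact Finset.le_expect Finset.univ_nonempty fun y _ => hT _
  obtain ⟨l, hl⟩ := exists_le_density_of_forall_exists (P := Line α (Fin m))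
    (f := fun p : (Fin n → α ⊕ Fin m) × Y => density {y | p.2 ∈ T (some ∘ Sum.elim id y ∘ p.1)})
    (fun p => density_le_one _)
    (R := fun l => {p | ∀ a, p.2 ∈ T (fill a (Sum.elim some l.idxFun ∘ p.1))})
    (half_pos hδ).le (half_pos hδ) hmean fun p hp => by
      obtain ⟨l, hl⟩ := hm _ hp
      exact ⟨l, fun a => hline l p.1 a ▸ hl a⟩
  rw [density_prod] at hl
  refine ⟨l, hl.trans_eq (Finset.expect_congr rfl fun u _ => ?_)⟩
  congr 1
  ext t
  simp

lemma exists_forall_eventually_le_expect_fill (h : DensityHalesJewett α) {δ : ℝ}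
    (hδ : 0 < δ) :
    ∃ θ : ℝ, 0 < θ ∧ ∀ d : ℕ, ∀ᶠ n in atTop, ∀ (Y : Type*) [Fintype Y]
      (T : (Fin n → Option α) → Set Y), (∀ x, δ ≤ density (T x)) →
        ∃ V : CombSubspace (Option α) d n,
          θ ≤ 𝔼 x, density (⋂ a, T (fill a (V x))) := by
  obtain ⟨m, θ, hθ, hm⟩ := h.exists_line_le_expect hδ
  refine ⟨θ / 2, half_pos hθ, fun d => ?_⟩
  filter_upwards [eventually_exists_combSubspace_le_expect (α ⊕ Fin m) (Option α) d
    (half_pos hθ).le (half_pos hθ)] with n hn Y _ T hT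
  obtain ⟨l, hl⟩ := hm n Y T hT
  obtain ⟨j, hj⟩ := l.proper
  set φ : α ⊕ Fin m → Option α := Sum.elim some l.idxFun with hφ
  set e : Option α → α ⊕ Fin m := fun o => o.elim (.inr j) .inl
  have he : LeftInverse φ e := by rintro (_ | a) <;> simp [hφ, e, hj]
  obtain ⟨σ, hσ⟩ := hn ⟨e, he.injective⟩ (fun u => density (⋂ a, T (fill a (φ ∘ u))))
    (fun u => density_le_one _) (by rwa [add_halves])
  refine ⟨σ.map φ, hσ.trans_eq (Finset.expect_congr rfl fun x _ => ?_)⟩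
  have hx : φ ∘ σ (e ∘ x) = σ.map φ x := by
    rw [← CombSubspace.map_apply, ← comp_assoc, he.comp_eq_id, id_comp]
  exact congrArg (fun w => density (⋂ a, T (fill a w))) hx

end DensityHalesJewett

end FilledSubspaces

section Induction

variable {α β : Type*} [Fintype α] [Fintype β]

namespace DensityHalesJewett

lemma limLineFreeDensity_option_nonpos [Nonempty α] (h : DensityHalesJewett α) :
    limLineFreeDensity (Option α) ≤ 0 := by
  by_contra! hδ
  set δ := limLineFreeDensity (Option α)
  obtain ⟨θ, hθ, hfill⟩ := h.exists_forall_eventually_le_expect_fill (half_pos hδ)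
  set γ := min (δ * θ / 8) (δ / 2)
  have hγθ : γ ≤ δ * θ / 8 := min_le_left _ _
  have hγδ : γ ≤ δ / 2 := min_le_right _ _
  have hγ : 0 < γ := lt_min (by positivity) (half_pos hδ)
  obtain ⟨d, hd⟩ := (h.eventually_density_preimage_le hγ).exists
  obtain ⟨n, hn⟩ := (hfill d).exists
  obtain ⟨k, hk⟩ := (eventually_le_density_append (α := Option α) n hγ).exists
  obtain ⟨A, hA, hAdens⟩ := exists_lineFree_density_eq (Option α) (n + k)
  have hfibre := hk A hA ((limLineFreeDensity_le _).trans_eq hAdens.symm)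
  obtain ⟨V, hV⟩ := hn (Fin k → Option α) (fun x => Fin.append x ⁻¹' A)
    fun x => (by linarith : δ / 2 ≤ δ - γ).trans (hfibre x)
  have hlower : δ - γ ≤ 𝔼 y, density {x | Fin.append (V x) y ∈ A} := by
    refine le_trans ?_ (expect_density_comm fun x => Fin.append (V x) ⁻¹' A).le
    exact Finset.le_expect Finset.univ_nonempty fun x _ => hfibre _
  have hupper : 𝔼 y, density {x | Fin.append (V x) y ∈ A}
      ≤ 𝔼 y, (δ + 3 * γ - δ * density {x | ∀ a, Fin.append (fill a (V x)) y ∈ A}) :=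
    Finset.expect_le_expect fun y _ => by
      have := hd n _ (hA.preimage (.withSuffix y)) V
      simpa only [preimage, CombSubspace.withSuffix_apply, mem_ofPred_eq] using this
  rw [Finset.expect_sub_distrib, Fintype.expect_const, ← Finset.mul_expect] at hupper
  rw [expect_density_comm] at hV
  simp only [mem_iInter, mem_preimage] at hV
  have := mul_le_mul_of_nonneg_left hV hδ.le
  linarith

lemma option [Nonempty α] (h : DensityHalesJewett α) : DensityHalesJewett (Option α) :=
  .of_limLineFreeDensity_nonpos h.limLineFreeDensity_option_nonpos

lemma congr (h : DensityHalesJewett α) (e : α ≃ β) : DensityHalesJewett β := fun δ hδ => by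
  filter_upwards [h δ hδ] with n hn A hA
  obtain ⟨l, hl⟩ := hn ((e ∘ ·) ⁻¹' A) <|
    hA.trans_eq (density_preimage_equiv (Equiv.arrowCongr (Equiv.refl _) e) A).symm
  refine ⟨l.map e, fun b => ?_⟩
  obtain ⟨a, rfl⟩ := e.surjective b
  rw [Line.map_apply]
  exact hl a

lemma of_subsingleton [Subsingleton α] : DensityHalesJewett α := fun δ hδ => by
  filter_upwards [eventually_gt_atTop 0] with n hn A hA
  have := Fin.pos_iff_nonempty.1 hn
  obtain ⟨w, hw⟩ := nonempty_of_density_pos (hδ.trans_le hA)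
  exact ⟨.diagonal α (Fin n), fun a => by
    rwa [Subsingleton.elim (Line.diagonal α (Fin n) a) w]⟩

end DensityHalesJewett

theorem densityHalesJewett (α : Type*) [Fintype α] : DensityHalesJewett α := by
  refine Fintype.induction_empty_option (P := fun α _ => DensityHalesJewett α)
    (fun α β _ e h => ?_) .of_subsingleton (fun α _ h => ?_) α
  · let _ := Fintype.ofEquiv β e.symm
    exact h.congr e
  · cases isEmpty_or_nonempty α
    · exact .of_subsingleton
    · exact h.option

end Induction

/-! ### Transfer to compact groups -/

section Transfer

variable {ι G K : Type*} [AddCommGroup G] [AddCommGroup K] [TopologicalSpace G] [TopologicalSpace K]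
  {n : ℕ} (π : ι → K →ₜ+ G) (κ : G →ₜ+ K)

/-- The homomorphism `x ↦ ∑ j, π (w j) (x j)` associated with a word `w`. -/
def wordSum (w : Fin n → ι) : (Fin n → K) →+ G :=
  ∑ j, (π (w j)).toAddMonoidHom.comp (Pi.evalAddMonoidHom (fun _ => K) j)

/-- The homomorphism associated with a combinatorial line: the variable acts as the identity and the
letter `i` as `κ ∘ π i`, so that for a section `κ` of every `π i`, the coordinates of its value are
the sums associated with the words on the line. -/
def lineSum (l : Line ι (Fin n)) : (Fin n → K) →+ K :=
  ∑ j, ((l.idxFun j).elim (.id K) fun i => (κ.comp (π i)).toAddMonoidHom).comp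
    (Pi.evalAddMonoidHom (fun _ => K) j)

variable {π κ}

lemma wordSum_apply (w : Fin n → ι) (x : Fin n → K) : wordSum π w x = ∑ j, π (w j) (x j) := by
  simp [wordSum]

lemma lineSum_apply (l : Line ι (Fin n)) (x : Fin n → K) :
    lineSum π κ l x = ∑ j, (l.idxFun j).elim (x j) fun i => κ (π i (x j)) := by
  simp only [lineSum, AddMonoidHom.finsetSum_apply]
  refine Finset.sum_congr rfl fun j _ => ?_
  cases l.idxFun j <;> rfl

lemma proj_lineSum (hκ : ∀ i g, π i (κ g) = g) (l : Line ι (Fin n)) (x : Fin n → K) (i : ι) :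
    π i (lineSum π κ l x) = wordSum π (l i) x := by
  rw [lineSum_apply, wordSum_apply, map_sum]
  refine Finset.sum_congr rfl fun j _ => ?_
  rcases hj : l.idxFun j with _ | i' <;> simp [hj, hκ]

lemma surjective_wordSum [NeZero n] (hκ : ∀ i g, π i (κ g) = g) (w : Fin n → ι) :
    Surjective (wordSum π w) := fun g => by
  refine ⟨Pi.single 0 (κ g), ?_⟩
  rw [wordSum_apply, Finset.sum_eq_single 0 (fun j _ hj => by simp [hj]) (by simp),
    Pi.single_eq_same, hκ]

lemma surjective_lineSum (l : Line ι (Fin n)) : Surjective (lineSum π κ l) := fun y => by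
  obtain ⟨j, hj⟩ := l.proper
  refine ⟨Pi.single j y, ?_⟩
  rw [lineSum_apply, Finset.sum_eq_single j _ (by simp), hj, Pi.single_eq_same]
  · rfl
  · rintro k - hk
    rw [Pi.single_eq_of_ne hk]
    cases l.idxFun k <;> simp

lemma continuous_wordSum [ContinuousAdd G] (w : Fin n → ι) : Continuous (wordSum π w) := by
  rw [show ⇑(wordSum π w) = _ from funext (wordSum_apply w)]
  exact continuous_finsetSum _ fun j _ => (π (w j)).continuous.comp (continuous_apply j)

lemma continuous_lineSum [ContinuousAdd K] (l : Line ι (Fin n)) :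
    Continuous (lineSum π κ l) := by
  rw [show ⇑(lineSum π κ l) = _ from funext (lineSum_apply l)]
  refine continuous_finsetSum _ fun j _ => ?_
  cases l.idxFun j with
  | none => exact continuous_apply j
  | some i => exact (κ.comp (π i)).continuous.comp (continuous_apply j)

variable [IsTopologicalAddGroup K] [CompactSpace K] [SecondCountableTopology K]
  [MeasurableSpace K] [BorelSpace K] {μ : Measure K} [μ.IsAddHaarMeasure] [IsProbabilityMeasure μ]

lemma measurePreserving_lineSum (l : Line ι (Fin n)) :
    MeasurePreserving (lineSum π κ l) (Measure.pi fun _ => μ) μ :=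
  (lineSum π κ l).measurePreserving (continuous_lineSum l) (surjective_lineSum l) (by simp)

lemma measurePreserving_wordSum [IsTopologicalAddGroup G] [CompactSpace G] [MeasurableSpace G]
    [BorelSpace G] {ν : Measure G} [ν.IsAddHaarMeasure] [IsProbabilityMeasure ν] [NeZero n]
    (hκ : ∀ i g, π i (κ g) = g) (w : Fin n → ι) :
    MeasurePreserving (wordSum π w) (Measure.pi fun _ => μ) ν :=
  (wordSum π w).measurePreserving (continuous_wordSum w) (surjective_wordSum hκ w) (by simp)

end Transfer

lemma integral_density {Ω W : Type*} [MeasurableSpace Ω] {ρ : Measure Ω} [IsFiniteMeasure ρ]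
    [Fintype W] {S : W → Set Ω} (hS : ∀ w, MeasurableSet (S w)) :
    ∫ x, density {w | x ∈ S w} ∂ρ = 𝔼 w, ρ.real (S w) := by
  simp only [density, Fintype.expect_eq_sum_div_card, integral_div]
  congr 1
  rw [integral_finsetSum]
  · exact Finset.sum_congr rfl fun w _ => integral_indicator_one (hS w)
  · exact fun w _ => (integrable_const (1 : ℝ)).indicator (hS w)

lemma integrable_density {Ω W : Type*} [MeasurableSpace Ω] {ρ : Measure Ω} [IsFiniteMeasure ρ]
    [Fintype W] {S : W → Set Ω} (hS : ∀ w, MeasurableSet (S w)) :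
    Integrable (fun x => density {w | x ∈ S w}) ρ := by
  simp only [density, Fintype.expect_eq_sum_div_card]
  exact (integrable_finsetSum _ fun w _ =>
    (integrable_const (1 : ℝ)).indicator (hS w)).div_const _

lemma expect_measureReal_le_of_forall_exists {Ω W P : Type*} [MeasurableSpace Ω] {ρ : Measure Ω}
    [IsProbabilityMeasure ρ] [Fintype W] [Fintype P] {S : W → Set Ω} {R : P → Set Ω}
    (hS : ∀ w, MeasurableSet (S w)) (hR : ∀ p, MeasurableSet (R p)) {δ : ℝ} (hδ : 0 ≤ δ)
    (h : ∀ x, δ ≤ density {w | x ∈ S w} → ∃ p, x ∈ R p) :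
    𝔼 w, ρ.real (S w) ≤ δ + ∑ p, ρ.real (R p) := by
  have hint (p : P) : Integrable ((R p).indicator (1 : Ω → ℝ)) ρ :=
    (integrable_const (1 : ℝ)).indicator (hR p)
  have hsum : Integrable (fun x => ∑ p, (R p).indicator (1 : Ω → ℝ) x) ρ :=
    integrable_finsetSum _ fun p _ => hint p
  calc 𝔼 w, ρ.real (S w) = ∫ x, density {w | x ∈ S w} ∂ρ := (integral_density hS).symm
    _ ≤ ∫ x, (δ + ∑ p, (R p).indicator (1 : Ω → ℝ) x) ∂ρ :=
      integral_mono (integrable_density hS) ((integrable_const δ).add hsum) <|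
        le_add_sum_indicator_of_forall_exists (fun _ => density_le_one _) hδ h
    _ = δ + ∑ p, ρ.real (R p) := by
      rw [integral_add (integrable_const δ) hsum, integral_finsetSum _ fun p _ => hint p]
      simp [integral_indicator_one, hR]

theorem szemeredi_circle_general {ι : Type*} [Finite ι] {α : ℝ} (hα : 0 < α) :
    ∃ c : ℝ, 0 < c ∧ ∀ (G K : Type*) [AddCommGroup G] [TopologicalSpace G]
      [IsTopologicalAddGroup G] [CompactSpace G] [MeasurableSpace G] [BorelSpace G]
      [AddCommGroup K] [TopologicalSpace K] [IsTopologicalAddGroup K] [CompactSpace K]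
      [SecondCountableTopology K] [MeasurableSpace K] [BorelSpace K]
      (ν : Measure G) [ν.IsAddHaarMeasure] [IsProbabilityMeasure ν]
      (μ : Measure K) [μ.IsAddHaarMeasure] [IsProbabilityMeasure μ]
      (π : ι → K →ₜ+ G) (κ : G →ₜ+ K), (∀ i g, π i (κ g) = g) →
        ∀ A : Set G, MeasurableSet A → α ≤ ν.real A → c ≤ μ.real {x | ∀ i, π i x ∈ A} := by
  have := Fintype.ofFinite ι
  rcases isEmpty_or_nonempty ι with hι | hι
  · exact ⟨1, one_pos, by intros; simp⟩
  obtain ⟨n, hn, hn0⟩ :=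
    ((densityHalesJewett ι (α / 2) (half_pos hα)).and (eventually_gt_atTop 0)).exists
  have : NeZero n := ⟨hn0.ne'⟩
  have := Fintype.ofFinite (Line ι (Fin n))
  refine ⟨α / 2 / (Fintype.card (Line ι (Fin n)) + 1), by positivity, ?_⟩
  intro G K _ _ _ _ _ _ _ _ _ _ _ _ _ ν _ _ μ _ _ π κ hκ A hA hαA
  have hE : MeasurableSet {x | ∀ i, π i x ∈ A} := by
    rw [ofPred_forall]
    exact .iInter fun i => (π i).continuous.measurable hA
  have hwords (w : Fin n → ι) := measurePreserving_wordSum (μ := μ) (ν := ν) hκ w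
  have hlines (l : Line ι (Fin n)) := measurePreserving_lineSum (π := π) (κ := κ) (μ := μ) l
  have hle := expect_measureReal_le_of_forall_exists (ρ := Measure.pi fun _ : Fin n => μ)
    (fun w => (hwords w).measurable hA) (fun l => (hlines l).measurable hE) (half_pos hα).le
    fun x hx => by
      obtain ⟨l, hl⟩ := hn _ hx
      exact ⟨l, fun i => (proj_lineSum hκ l x i).symm ▸ hl i⟩
  simp only [(hwords _).measureReal_preimage hA.nullMeasurableSet,
    (hlines _).measureReal_preimage hE.nullMeasurableSet, Fintype.expect_const,
    Finset.sum_const, Finset.card_univ, nsmul_eq_mul] at hle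
  rw [div_le_iff₀ (by positivity)]
  linarith [measureReal_nonneg (μ := μ) (s := {x | ∀ i, π i x ∈ A})]

section Kernel

instance isProbabilityMeasure_circle : IsProbabilityMeasure (volume : Measure 𝕋) := ⟨by simp⟩

variable {r m : ℕ} (L : Matrix (Fin r) (Fin m) ℤ)

variable {L} in
lemma mem_kerT {x : Fin m → 𝕋} : x ∈ kerT L ↔ ∀ i, ∑ j, L i j • x j = 0 :=
  AddMonoidHom.mem_ker.trans funext_iff

lemma isClosed_kerT : IsClosed (kerT L : Set (Fin m → 𝕋)) := by
  have hker : (kerT L : Set (Fin m → 𝕋)) = ⋂ i, {x | ∑ j, L i j • x j = 0} := by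
    ext x
    simp only [SetLike.mem_coe, mem_kerT, mem_iInter, mem_ofPred_eq]
  exact hker ▸ isClosed_iInter fun i => isClosed_eq (by fun_prop) continuous_const

instance compactSpace_kerT : CompactSpace (kerT L) :=
  isCompact_iff_compactSpace.1 (isClosed_kerT L).isCompact

instance secondCountableTopology_kerT : SecondCountableTopology (kerT L) :=
  TopologicalSpace.Subtype.secondCountableTopology _

/-- The `j`-th coordinate of a solution, as a continuous homomorphism. -/
def kerTCoord (j : Fin m) : kerT L →ₜ+ 𝕋 where
  toAddMonoidHom := (Pi.evalAddMonoidHom (fun _ => 𝕋) j).comp (kerT L).subtype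
  continuous_toFun := (continuous_apply j).comp continuous_subtype_val

variable {L} in
/-- The embedding of the circle into the solutions of an invariant system as the constant
solutions. -/
def kerTDiagonal (hL : ∀ i, ∑ j, L i j = 0) : 𝕋 →ₜ+ kerT L where
  toFun t := ⟨fun _ => t, mem_kerT.2 fun i => by rw [← Finset.sum_smul, hL, zero_smul]⟩
  map_zero' := rfl
  map_add' _ _ := rfl
  continuous_toFun := (continuous_pi fun _ => continuous_id).subtype_mk _

end Kernel

/-- **Szemerédi-type theorem for invariant systems on the circle.**
Let `L` be an invariant (`L𝟙 = 0`) `r × m` integer matrix of full rank `r`. For every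
`α > 0` there is `c > 0` such that, with `μL` the normalized Haar probability measure on
`ker_𝕋 L`, every Borel set `A ⊆ 𝕋` of measure at least `α` has solution measure
`S_L(A) = μL(A^m ∩ ker_𝕋 L) ≥ c`. -/
theorem szemeredi_circle {r m : ℕ} (L : Matrix (Fin r) (Fin m) ℤ)
    (hrank : (L.map (Int.cast : ℤ → ℚ)).rank = r)
    (hinv : ∀ i, ∑ j, L i j = 0)
    {α : ℝ} (hα : 0 < α) :
    ∃ c : ℝ, 0 < c ∧
      ∀ (μL : Measure (kerT L)), μL.IsAddHaarMeasure → IsProbabilityMeasure μL →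
        ∀ A : Set 𝕋, MeasurableSet A → α ≤ (volume A).toReal →
          c ≤ (μL {x : kerT L | ∀ i, (x : Fin m → 𝕋) i ∈ A}).toReal := by
  obtain ⟨c, hc, h⟩ := szemeredi_circle_general (ι := Fin m) hα
  exact ⟨c, hc, fun μL _ _ =>
    h 𝕋 (kerT L) volume μL (kerTCoord L) (kerTDiagonal hinv) fun _ _ => rfl⟩
end
end

section
/- Let L be an r×m integer matrix of full rank r. There exists K_L > 0 depending only on L such that for every positive integer p there exist elements j_1/p, j_2/p, …, j_K/p ∈ J(L,p) with K ≤ K_L such that J(L,p) is the disjoint union over k ∈ {1, …, K} of the cosets j_k/p + (Λ(p) ∩ ker_T L). -/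
open MeasureTheory Set

noncomputable section

/-- The point `j/p = (j(1)/p, …, j(m)/p)` of `𝕋^m`. -/
def discPt (m p : ℕ) (j : Fin m → ℤ) : Fin m → 𝕋 :=
  fun i => (((j i : ℝ) / p : ℝ) : 𝕋)

/-- The discrete torus `Λ(p) = ℤ_p^m / p ≤ 𝕋^m`, as a set. -/
def ΛSet (m p : ℕ) : Set (Fin m → 𝕋) :=
  {y | ∃ j : Fin m → ℤ, y = discPt m p j}

/-- The cube `[0, 1/p)^m ⊆ 𝕋^m`. -/
def cube0 (m p : ℕ) : Set (Fin m → 𝕋) :=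
  Set.pi Set.univ fun _ : Fin m => (fun t : ℝ => (t : 𝕋)) '' Set.Ico (0 : ℝ) (1 / p)

/-- `J(L,p)`: the set of points `j/p ∈ Λ(p)` such that
`μ_L((j/p + [0,1/p)^m) ∩ ker_𝕋 L) > 0`, where `μL` is the Haar probability measure on
`ker_𝕋 L`. -/
def Jset {r m : ℕ} (L : Matrix (Fin r) (Fin m) ℤ) (p : ℕ) (μL : Measure (kerT L)) :
    Set (Fin m → 𝕋) :=
  {y ∈ ΛSet m p | 0 < μL {x : kerT L | (x : Fin m → 𝕋) - y ∈ cube0 m p}}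

/-!
The homomorphism `L` separates the cosets of `Λ(p) ∩ ker L` inside `Λ(p)`, and `J(L,p)` is a union
of such cosets because `μL` is invariant, so it suffices to bound `#L(J(L,p))`. If `y ∈ J(L,p)`,
then some `t ∈ [0, 1/p)^m` has `y + t ∈ ker L`, so `Ly = -Lt` mod 1. As `Ly ∈ Λ(p)`, the real vector
`L(pt)` is integral, and it lies in a box depending only on `L` because `pt ∈ [0, 1)^m`.
-/

theorem exists_fin_pairwise_disjoint_cosets {G H : Type*} [AddGroup G] [AddGroup H] (f : G →+ H)
    (A : AddSubgroup G) {J : Set G} (hJA : J ⊆ A)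
    (hadd : ∀ y ∈ J, ∀ z ∈ A ⊓ f.ker, y + z ∈ J) (hfin : (f '' J).Finite) :
    ∃ a : Fin (f '' J).ncard → G, (∀ k, a k ∈ J) ∧
      J = ⋃ k, (fun y => a k + y) '' ((A ⊓ f.ker : AddSubgroup G) : Set G) ∧
      Pairwise fun k k' =>
        Disjoint ((fun y => a k + y) '' ((A ⊓ f.ker : AddSubgroup G) : Set G))
          ((fun y => a k' + y) '' ((A ⊓ f.ker : AddSubgroup G) : Set G)) := by
  have : Finite (f '' J) := hfin
  let e : f '' J ≃ Fin (f '' J).ncard := Finite.equivFin _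
  choose a haJ hfa using fun k => (e.symm k).2
  have hf_coset (k) {z} (hz : z ∈ A ⊓ f.ker) : f (a k + z) = e.symm k := by
    rw [map_add, hfa, hz.2, add_zero]
  refine ⟨a, haJ, Subset.antisymm (fun y hy => ?_) ?_, fun k k' hne => ?_⟩
  · let k := e ⟨f y, y, hy, rfl⟩
    have hfk : f (a k) = f y := by rw [hfa, Equiv.symm_apply_apply]
    refine mem_iUnion.2 ⟨k, -a k + y, ⟨?_, ?_⟩, add_neg_cancel_left _ _⟩
    · exact A.add_mem (A.neg_mem (hJA (haJ k))) (hJA hy)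
    · exact AddMonoidHom.mem_ker.2 (by rw [map_add, map_neg, hfk, neg_add_cancel])
  · rintro _ ⟨_, ⟨k, rfl⟩, z, hz, rfl⟩
    exact hadd _ (haJ k) z hz
  · refine Set.disjoint_left.2 ?_
    rintro _ ⟨z, hz, rfl⟩ ⟨w, hw, hwz⟩
    refine hne (e.symm.injective (Subtype.ext ?_))
    rw [← hf_coset k hz, ← hf_coset k' hw]
    exact congrArg f hwz.symm

/-- The homomorphism `n ↦ n/p mod 1`, which is `discPt` in a single coordinate. -/
def divHom (p : ℕ) : ℤ →+ 𝕋 :=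
  (QuotientAddGroup.mk' _).comp ((AddMonoidHom.mulRight (p : ℝ)⁻¹).comp (Int.castAddHom ℝ))

lemma discPt_eq_divHom_comp (m p : ℕ) (j : Fin m → ℤ) : discPt m p j = divHom p ∘ j := rfl

/-- The discrete torus `Λ(p)` as a subgroup; its underlying set is `ΛSet m p`. -/
def ΛSubgroup (m p : ℕ) : AddSubgroup (Fin m → 𝕋) :=
  ((divHom p).compLeft (Fin m)).range

lemma coe_ΛSubgroup (m p : ℕ) : (ΛSubgroup m p : Set (Fin m → 𝕋)) = ΛSet m p := by
  ext y
  exact exists_congr fun _ => eq_comm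

lemma coe_eq_discPt {m p : ℕ} (hp : p ≠ 0) {u : Fin m → ℝ} {n : Fin m → ℤ}
    (hn : ∀ i, p * u i = n i) : (fun i => (u i : 𝕋)) = discPt m p n := by
  ext i
  rw [discPt, ← hn, mul_div_cancel_left₀ _ (Nat.cast_ne_zero.2 hp)]

lemma coe_mem_ΛSet_iff {m p : ℕ} (hp : p ≠ 0) {u : Fin m → ℝ} :
    (fun i => (u i : 𝕋)) ∈ ΛSet m p ↔ ∃ n : Fin m → ℤ, ∀ i, p * u i = n i := by
  have hp' : (p : ℝ) ≠ 0 := Nat.cast_ne_zero.2 hp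
  constructor
  · rintro ⟨j, hj⟩
    have hshift (i) : ∃ q : ℤ, q • (1 : ℝ) = u i - j i / p := by
      rw [← AddCircle.coe_eq_zero_iff, AddCircle.coe_sub, sub_eq_zero]
      exact congrFun hj i
    choose q hq using hshift
    refine ⟨fun i => p * q i + j i, fun i => ?_⟩
    have hu : u i = q i + j i / p := by
      rw [← sub_eq_iff_eq_add, ← hq, zsmul_one]
    push_cast
    rw [hu, mul_add, mul_div_cancel₀ _ hp']
  · rintro ⟨n, hn⟩
    exact ⟨n, coe_eq_discPt hp hn⟩

section IntegerMatrix

variable {r m : ℕ} (L : Matrix (Fin r) (Fin m) ℤ)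

lemma Lhom_apply {G : Type*} [AddCommGroup G] (x : Fin m → G) (i : Fin r) :
    Lhom L G x i = ∑ k, L i k • x k := rfl

lemma Lhom_map {G H : Type*} [AddCommGroup G] [AddCommGroup H] (f : G →+ H) (x : Fin m → G) :
    Lhom L H (f ∘ x) = f ∘ Lhom L G x := by
  ext i
  simp only [Lhom_apply, Function.comp_apply, map_sum, map_zsmul]

lemma Lhom_discPt (p : ℕ) (j : Fin m → ℤ) :
    Lhom L 𝕋 (discPt m p j) = discPt r p (Lhom L ℤ j) := by
  simp only [discPt_eq_divHom_comp, Lhom_map]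

lemma Lhom_coe (t : Fin m → ℝ) :
    Lhom L 𝕋 (fun k => (t k : 𝕋)) = fun i => (Lhom L ℝ t i : 𝕋) :=
  Lhom_map L (QuotientAddGroup.mk' _) t

lemma zsmul_le_posPart {R : Type*} [AddCommGroupWithOne R] [PartialOrder R] [IsOrderedAddMonoid R]
    (a : ℤ) {t : R} (ht₀ : 0 ≤ t) (ht₁ : t ≤ 1) : a • t ≤ ((a⁺ : ℤ) : R) :=
  calc a • t ≤ a⁺ • t := zsmul_le_zsmul_left ht₀ (le_posPart a)
    _ ≤ a⁺ • (1 : R) := zsmul_le_zsmul_right (posPart_nonneg a) ht₁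
    _ = ((a⁺ : ℤ) : R) := zsmul_one _

lemma neg_negPart_le_zsmul {R : Type*} [AddCommGroupWithOne R] [PartialOrder R]
    [IsOrderedAddMonoid R] (a : ℤ) {t : R} (ht₀ : 0 ≤ t) (ht₁ : t ≤ 1) :
    ((-a⁻ : ℤ) : R) ≤ a • t := by
  have h := zsmul_le_posPart (-a) ht₀ ht₁
  rwa [posPart_neg, neg_zsmul, neg_le, ← Int.cast_neg] at h

/-- The integer points of the smallest box containing `L([0,1]^m)`. -/
def unitCubeImageBox : Finset (Fin r → ℤ) :=
  Finset.Icc (fun i => ∑ k, -(L i k)⁻) (fun i => ∑ k, (L i k)⁺)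

lemma card_unitCubeImageBox :
    (unitCubeImageBox L).card = ∏ i, (∑ k, (L i k).natAbs + 1) := by
  rw [unitCubeImageBox, Pi.card_Icc]
  refine Finset.prod_congr rfl fun i _ => ?_
  have hlength : ∑ k, (L i k)⁺ - ∑ k, -(L i k)⁻ = ((∑ k, (L i k).natAbs : ℕ) : ℤ) := by
    rw [← Finset.sum_sub_distrib]
    push_cast
    exact Finset.sum_congr rfl fun k _ => by rw [sub_neg_eq_add, posPart_add_negPart]
  rw [Int.card_Icc, add_sub_right_comm, hlength]
  rfl

variable {L}

lemma mem_unitCubeImageBox_of_Lhom_eq {R : Type*} [Ring R] [PartialOrder R] [IsOrderedRing R]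
    [Nontrivial R] {s : Fin m → R} (hs₀ : ∀ k, 0 ≤ s k) (hs₁ : ∀ k, s k ≤ 1)
    {n : Fin r → ℤ} (hn : ∀ i, Lhom L R s i = n i) : n ∈ unitCubeImageBox L := by
  refine Finset.mem_Icc.2 ⟨fun i => ?_, fun i => ?_⟩ <;> rw [← Int.cast_le (R := R), ← hn i]
  · rw [Lhom_apply, Int.cast_sum]
    exact Finset.sum_le_sum fun k _ => neg_negPart_le_zsmul _ (hs₀ k) (hs₁ k)
  · rw [Lhom_apply, Int.cast_sum]
    exact Finset.sum_le_sum fun k _ => zsmul_le_posPart _ (hs₀ k) (hs₁ k)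

variable {p : ℕ} {μL : Measure (kerT L)}

lemma add_mem_Jset [μL.IsAddLeftInvariant] {y z : Fin m → 𝕋} (hy : y ∈ Jset L p μL)
    (hz : z ∈ ΛSubgroup m p ⊓ kerT L) : y + z ∈ Jset L p μL := by
  obtain ⟨hyΛ, hpos⟩ := hy
  rw [← coe_ΛSubgroup] at hyΛ
  refine ⟨coe_ΛSubgroup m p ▸ add_mem hyΛ hz.1, ?_⟩
  have htranslate : {x : kerT L | (x : Fin m → 𝕋) - (y + z) ∈ cube0 m p} =
      (fun x => -(⟨z, hz.2⟩ : kerT L) + x) ⁻¹' {x | (x : Fin m → 𝕋) - y ∈ cube0 m p} := by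
    ext x
    rw [mem_ofPred_eq, sub_add_eq_sub_sub_swap, sub_eq_neg_add (x : Fin m → 𝕋) z]
    rfl
  rwa [htranslate, measure_preimage_add]

lemma exists_add_coe_mem_kerT_of_mem_Jset {y : Fin m → 𝕋} (hy : y ∈ Jset L p μL) :
    ∃ t : Fin m → ℝ, (∀ k, t k ∈ Ico (0 : ℝ) (1 / p)) ∧ y + (fun k => (t k : 𝕋)) ∈ kerT L := by
  obtain ⟨x, hx⟩ := nonempty_of_measure_ne_zero hy.2.ne'
  choose t ht htx using fun k => hx k (mem_univ k)
  refine ⟨t, ht, ?_⟩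
  rw [funext htx, add_sub_cancel]
  exact x.2

lemma Lhom_image_Jset_subset (hp : 0 < p) :
    Lhom L 𝕋 '' Jset L p μL ⊆
      (fun n => -discPt r p n) '' (unitCubeImageBox L : Set (Fin r → ℤ)) := by
  rintro _ ⟨y, hy, rfl⟩
  obtain ⟨t, ht, hker⟩ := exists_add_coe_mem_kerT_of_mem_Jset hy
  have hneg : Lhom L 𝕋 y = -fun i => (Lhom L ℝ t i : 𝕋) := by
    rw [← Lhom_coe, eq_neg_iff_add_eq_zero, ← map_add]
    exact hker
  have hΛ : (fun i => (Lhom L ℝ t i : 𝕋)) ∈ ΛSet r p := by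
    obtain ⟨j, rfl⟩ := hy.1
    rw [← coe_ΛSubgroup, SetLike.mem_coe, ← neg_mem_iff, ← hneg, Lhom_discPt]
    exact ⟨_, rfl⟩
  obtain ⟨n, hn⟩ := (coe_mem_ΛSet_iff hp.ne').1 hΛ
  have hp' : (0 : ℝ) < p := Nat.cast_pos.2 hp
  refine ⟨n, mem_unitCubeImageBox_of_Lhom_eq (s := p • t) (fun k => ?_) (fun k => ?_)
    (fun i => ?_), ?_⟩
  · exact nsmul_nonneg (ht k).1 p
  · rw [Pi.smul_apply, nsmul_eq_mul]
    exact (le_div_iff₀' hp').1 (ht k).2.le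
  · rw [map_nsmul, Pi.smul_apply, nsmul_eq_mul, hn]
  · rw [hneg, coe_eq_discPt hp.ne' hn]

end IntegerMatrix

theorem J_cover_general {r m : ℕ} (L : Matrix (Fin r) (Fin m) ℤ) (μL : Measure (kerT L))
    [μL.IsAddLeftInvariant] {p : ℕ} (hp : 0 < p) :
    ∃ K : ℕ, K ≤ ∏ i, (∑ j, (L i j).natAbs + 1) ∧
      ∃ a : Fin K → (Fin m → 𝕋),
        (∀ k, a k ∈ Jset L p μL) ∧
        (Jset L p μL =
          ⋃ k : Fin K, (fun y => a k + y) '' (ΛSet m p ∩ (kerT L : Set (Fin m → 𝕋)))) ∧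
        Pairwise fun k k' : Fin K =>
          Disjoint ((fun y => a k + y) '' (ΛSet m p ∩ (kerT L : Set (Fin m → 𝕋))))
            ((fun y => a k' + y) '' (ΛSet m p ∩ (kerT L : Set (Fin m → 𝕋)))) := by
  have hsub := Lhom_image_Jset_subset (μL := μL) hp
  have hbox := (unitCubeImageBox L).finite_toSet
  refine ⟨(Lhom L 𝕋 '' Jset L p μL).ncard, ?_, ?_⟩
  · calc (Lhom L 𝕋 '' Jset L p μL).ncard
        ≤ (unitCubeImageBox L : Set (Fin r → ℤ)).ncard :=
          (ncard_le_ncard hsub (hbox.image _)).trans (ncard_image_le hbox)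
      _ = ∏ i, (∑ j, (L i j).natAbs + 1) := by rw [ncard_coe_finset, card_unitCubeImageBox]
  · rw [← coe_ΛSubgroup]
    exact exists_fin_pairwise_disjoint_cosets (Lhom L 𝕋) (ΛSubgroup m p)
      (fun _ hy => coe_ΛSubgroup m p ▸ hy.1) (fun _ hy _ hz => add_mem_Jset hy hz)
      ((hbox.image _).subset hsub)

/-- **`J(L,p)` is a bounded disjoint union of cosets of `Λ(p) ∩ ker_𝕋 L`.**
For `L` an `r × m` integer matrix of full rank `r` and `μL` the Haar probability measure on
`ker_𝕋 L`, there is `K_L > 0` depending only on `L` such that for every positive integer `p`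
there are `j₁/p, …, j_K/p ∈ J(L,p)` with `K ≤ K_L` and
`J(L,p) = ⨆_{k ∈ [K]} (j_k/p + (Λ(p) ∩ ker_𝕋 L))`, the union being disjoint. -/
theorem J_cover {r m : ℕ} (L : Matrix (Fin r) (Fin m) ℤ)
    (hrank : (L.map (Int.cast : ℤ → ℚ)).rank = r)
    (μL : Measure (kerT L)) (hHaar : μL.IsAddHaarMeasure) (hprob : IsProbabilityMeasure μL) :
    ∃ KL : ℕ, 0 < KL ∧
      ∀ p : ℕ, 0 < p →
        ∃ K : ℕ, K ≤ KL ∧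
          ∃ a : Fin K → (Fin m → 𝕋),
            (∀ k, a k ∈ Jset L p μL) ∧
            (Jset L p μL =
              ⋃ k : Fin K, (fun y => a k + y) '' (ΛSet m p ∩ (kerT L : Set (Fin m → 𝕋)))) ∧
            Pairwise fun k k' : Fin K =>
              Disjoint ((fun y => a k + y) '' (ΛSet m p ∩ (kerT L : Set (Fin m → 𝕋))))
                ((fun y => a k' + y) '' (ΛSet m p ∩ (kerT L : Set (Fin m → 𝕋)))) :=
  ⟨_, Finset.prod_pos fun _ _ => Nat.succ_pos _, fun _ hp => J_cover_general L μL hp⟩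
end
end

section
/- Let L be an r×m integer matrix of full rank r, let p be a sufficiently large prime, and let A_1, …, A_m be p-measurable subsets of T = ℝ/ℤ. Then there exist elements j_1/p, …, j_K/p ∈ J(L,p), with K ≤ K_L a bound depending only on L, such that S_{L,T}(A_1, …, A_m) = Σ_{k=1}^{K} λ_k · S_{L,ℤ_p}(A_1' − j_k(1), …, A_m' − j_k(m)), where λ_k = p^{m−r} μ_{L,T}((j_k/p + [0,1/p)^m) ∩ ker_T L). -/
open MeasureTheory Set

noncomputable section

/-- `ker_{ℤ_p} L = {j ∈ ℤ_p^m : Lj = 0}`. -/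
def kerZ {r m : ℕ} (L : Matrix (Fin r) (Fin m) ℤ) (p : ℕ) : AddSubgroup (Fin m → ZMod p) :=
  (Lhom L (ZMod p)).ker

/-- `A ⊆ 𝕋` is `p`-measurable if it is a union of intervals `[(k-1)/p, k/p)` from the
`p`-partition of `𝕋`. -/
def PMeasurable (p : ℕ) (A : Set 𝕋) : Prop :=
  ∃ s : Finset (Fin p),
    A = ⋃ k ∈ s, (fun t : ℝ => (t : 𝕋)) '' Set.Ico ((k : ℝ) / p) (((k : ℝ) + 1) / p)

/-- For `p`-measurable `A ⊆ 𝕋`, the set `A' ⊆ ℤ_p` defined by `1_{A'}(x) = 1_A(x/p)`. -/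
def discretize (p : ℕ) (A : Set 𝕋) : Set (ZMod p) :=
  {k : ZMod p | (((k.val : ℝ) / p : ℝ) : 𝕋) ∈ A}

/-- `S_{L,ℤ_p}(B₁, …, B_m)`: the proportion of `x ∈ ker_{ℤ_p} L` with `x_i ∈ B_i`
for all `i`. -/
def SZ {r m : ℕ} (L : Matrix (Fin r) (Fin m) ℤ) (p : ℕ) (B : Fin m → Set (ZMod p)) : ℝ :=
  (Nat.card {x : ↥(kerZ L p) // ∀ i, (x : Fin m → ZMod p) i ∈ B i} : ℝ) /
    (Nat.card ↥(kerZ L p) : ℝ)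

/-- The weight `λ(j) = p^{m-r} μ_{L,𝕋}((j/p + [0,1/p)^m) ∩ ker_𝕋 L)`. -/
def lamVal {r m : ℕ} (L : Matrix (Fin r) (Fin m) ℤ) (p : ℕ) (μL : Measure (kerT L))
    (j : Fin m → ℤ) : ℝ :=
  (p : ℝ) ^ (m - r) * (μL {x : kerT L | (x : Fin m → 𝕋) - discPt m p j ∈ cube0 m p}).toReal

/-!
Cut `𝕋^m` into the `p^m` cubes `j/p + [0,1/p)^m`. Translation by `h/p` with `h ∈ ker_{ℤ_p} L`
preserves `ker_𝕋 L` and carries the cube of `j` to that of `j + h`, so the mass of `ker_𝕋 L` in a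
cube depends only on the coset of `j` modulo `ker_{ℤ_p} L`, that is, on `Lj`. Grouping the cubes
that make up `A₁ × ⋯ × A_m` by coset gives one term for each coset of positive mass.

If `x = t mod 1` lies in `ker_𝕋 L`, then `Lt` is an integer vector, so the index `⌊pt⌋` of the cube
of `x` satisfies `L⌊pt⌋ ≡ -L{pt}` modulo `p`, a vector whose entries are at most the absolute row
sums of `L`. Hence the number of cosets of positive mass is bounded in terms of `L` alone.

Finally `|ker_{ℤ_p} L| = p^{m-r}` as soon as `L` is onto modulo `p`, which full rank gives for all
large primes.
-/

section General

theorem sum_eq_sum_card_fiber_mul {α β R : Type*} [DecidableEq β] [NonAssocSemiring R]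
    {φ : α → β} {w : α → R} (hw : ∀ a b, φ a = φ b → w a = w b) {s : Finset α}
    (hs : BijOn φ s (φ '' Function.support w)) (t : Finset α) :
    ∑ a ∈ t, w a = ∑ c ∈ s, (t.filter (φ · = φ c)).card * w c := by
  have expand : ∀ a, w a = ∑ c ∈ s, if φ a = φ c then w c else 0 := by
    intro a
    by_cases ha : w a = 0
    · refine ha.trans (Finset.sum_eq_zero fun c _ => ?_).symm
      split_ifs with hac
      exacts [hw a c hac ▸ ha, rfl]
    · obtain ⟨c, hc, hca⟩ := hs.surjOn (mem_image_of_mem φ ha)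
      rw [Finset.sum_eq_single_of_mem c hc fun b hb hbc =>
        if_neg fun hab => hbc (hs.injOn hb hc (hab.symm.trans hca.symm)),
        if_pos hca.symm, hw c a hca]
  calc ∑ a ∈ t, w a = ∑ c ∈ s, ∑ a ∈ t, if φ a = φ c then w c else 0 := by
        rw [Finset.sum_comm]
        exact Finset.sum_congr rfl fun a _ => expand a
    _ = ∑ c ∈ s, (t.filter (φ · = φ c)).card * w c := by
        simp only [← Finset.sum_filter, Finset.sum_const, nsmul_eq_mul]

theorem exists_mul_eq_smul_one_of_rank_eq_card {m n R K : Type*} [Fintype m] [DecidableEq m]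
    [Fintype n] [CommRing R] [IsDomain R] [Field K] [Algebra R K]
    [IsFractionRing R K] (L : Matrix m n R) (hL : (L.map (algebraMap R K)).rank = Fintype.card m) :
    ∃ d : R, d ≠ 0 ∧ ∃ N : Matrix n m R, L * N = d • (1 : Matrix m m R) := by
  have surj : Function.Surjective (L.map (algebraMap R K)).mulVec :=
    LinearMap.range_eq_top.1 <| Submodule.eq_top_of_finrank_eq <|
      hL.trans (Module.finrank_fintype_fun_eq_card K).symm
  obtain ⟨B, hB⟩ := Matrix.mulVec_surjective_iff_exists_right_inverse.1 surj
  obtain ⟨d, hd⟩ := IsLocalization.exist_integer_multiples_of_finite (nonZeroDivisors R)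
    (fun q : n × m => B q.1 q.2)
  choose N hN using hd
  have hdB : (Matrix.of fun j k => N (j, k)).map (algebraMap R K) = (d : R) • B := by
    ext j k
    exact hN (j, k)
  refine ⟨d, nonZeroDivisors.ne_zero d.2, Matrix.of fun j k => N (j, k),
    Matrix.map_injective (IsFractionRing.injective R K) ?_⟩
  simp [Matrix.map_mul, hdB, hB, Matrix.mul_smul, Algebra.smul_def]

end General

section Lhom

variable {r m : ℕ}

theorem Lhom_comp {G H : Type*} [AddCommGroup G] [AddCommGroup H]
    (L : Matrix (Fin r) (Fin m) ℤ) (f : G →+ H) (x : Fin m → G) :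
    Lhom L H (f ∘ x) = f ∘ Lhom L G x := by
  ext i
  simp [Lhom]

theorem Lhom_mul_apply {n : ℕ} {G : Type*} [AddCommGroup G] (L : Matrix (Fin r) (Fin m) ℤ)
    (N : Matrix (Fin m) (Fin n) ℤ) (x : Fin n → G) :
    Lhom (L * N) G x = Lhom L G (Lhom N G x) := by
  ext i
  simp only [Lhom, AddMonoidHom.coe_mk, ZeroHom.coe_mk, Matrix.mul_apply, Finset.sum_smul,
    Finset.smul_sum, mul_smul]
  exact Finset.sum_comm

theorem Lhom_smul_one_apply {G : Type*} [AddCommGroup G] (d : ℤ) (x : Fin r → G) :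
    Lhom (d • (1 : Matrix (Fin r) (Fin r) ℤ)) G x = d • x := by
  ext i
  simp [Lhom, Matrix.one_apply]

theorem Lhom_surjective {G : Type*} [AddCommGroup G] {L : Matrix (Fin r) (Fin m) ℤ} {d : ℤ}
    {N : Matrix (Fin m) (Fin r) ℤ} (hLN : L * N = d • (1 : Matrix (Fin r) (Fin r) ℤ))
    (hd : Function.Surjective fun g : G => d • g) : Function.Surjective (Lhom L G) := by
  intro v
  choose u hu using fun i => hd (v i)
  refine ⟨Lhom N G u, ?_⟩
  rw [← Lhom_mul_apply, hLN, Lhom_smul_one_apply]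
  exact funext hu

theorem natCard_kerZ_mul_pow {L : Matrix (Fin r) (Fin m) ℤ} {p : ℕ}
    (hL : Function.Surjective (Lhom L (ZMod p))) : Nat.card (kerZ L p) * p ^ r = p ^ m := by
  have index_eq : (kerZ L p).index = p ^ r := by
    rw [kerZ, AddSubgroup.index_ker, AddMonoidHom.range_eq_top.2 hL]
    simp [Nat.card_fun]
  simpa [index_eq, Nat.card_fun] using (kerZ L p).card_mul_index

theorem exists_forall_prime_natCard_kerZ_eq {L : Matrix (Fin r) (Fin m) ℤ}
    (hL : (L.map (Int.cast : ℤ → ℚ)).rank = r) :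
    ∃ p₀ : ℕ, ∀ p : ℕ, p.Prime → p₀ ≤ p → Nat.card (kerZ L p) = p ^ (m - r) := by
  obtain ⟨d, hd, N, hLN⟩ :=
    exists_mul_eq_smul_one_of_rank_eq_card (K := ℚ) L (by simpa using hL)
  refine ⟨d.natAbs + 1, fun p hp hdp => ?_⟩
  have : Fact p.Prime := ⟨hp⟩
  have d_ne_zero : (d : ZMod p) ≠ 0 := by
    rw [Ne, ZMod.intCast_zmod_eq_zero_iff_dvd, Int.natCast_dvd]
    exact Nat.not_dvd_of_pos_of_lt (Int.natAbs_pos.2 hd) hdp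
  have hrm : r ≤ m := hL ▸ by simpa using (L.map (Int.cast : ℤ → ℚ)).rank_le_width
  have card_mul := natCard_kerZ_mul_pow <| Lhom_surjective hLN fun g : ZMod p =>
    ⟨(d : ZMod p)⁻¹ * g, by simp [d_ne_zero]⟩
  rw [← Nat.pow_div hrm hp.pos, ← card_mul, Nat.mul_div_cancel _ (pow_pos hp.pos r)]

end Lhom

section Cell

theorem periodic_intFloor_mul (p : ℕ) :
    Function.Periodic (fun t : ℝ => ((⌊p * t⌋ : ℤ) : ZMod p)) 1 := fun t => by
  simp [mul_add]

/-- The index `k ∈ ℤ_p` of the interval `[k/p, (k+1)/p)` of the `p`-partition of `𝕋` in which a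
point lies. -/
def cell (p : ℕ) : 𝕋 → ZMod p :=
  (periodic_intFloor_mul p).lift

theorem cell_coe (p : ℕ) (t : ℝ) : cell p (t : 𝕋) = ((⌊p * t⌋ : ℤ) : ZMod p) :=
  rfl

theorem measurableSet_cell_preimage (p : ℕ) (s : Set (ZMod p)) :
    MeasurableSet (cell p ⁻¹' s) := by
  have floor_measurable : Measurable fun t : ℝ => ⌊p * t⌋ :=
    Int.measurable_floor.comp (measurable_const_mul _)
  exact measurableSet_quotient.2 (floor_measurable (t := (Int.cast : ℤ → ZMod p) ⁻¹' s) trivial)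

variable {p : ℕ} [NeZero p]

theorem cell_toAddCircle_add (k : ZMod p) (x : 𝕋) :
    cell p (ZMod.toAddCircle k + x) = k + cell p x := by
  obtain ⟨t, rfl⟩ := QuotientAddGroup.mk_surjective x
  have hp : (p : ℝ) ≠ 0 := NeZero.ne _
  rw [ZMod.toAddCircle_apply]
  change cell p ((k.val / p + t : ℝ) : 𝕋) = k + cell p (t : 𝕋)
  rw [cell_coe, cell_coe, mul_add, mul_div_cancel₀ _ hp, Int.floor_natCast_add]
  simp

theorem cell_toAddCircle (k : ZMod p) : cell p (ZMod.toAddCircle k) = k := by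
  have cell_zero : cell p 0 = 0 := by
    simpa using cell_coe p 0
  simpa [cell_zero] using cell_toAddCircle_add k 0

theorem mem_Ico_div_iff_floor_mul_eq {t : ℝ} {k : ℤ} :
    t ∈ Ico ((k : ℝ) / p) ((k + 1) / p) ↔ ⌊p * t⌋ = k := by
  have hp : (0 : ℝ) < p := Nat.cast_pos.2 (NeZero.pos p)
  rw [mem_Ico, div_le_iff₀' hp, lt_div_iff₀' hp, Int.floor_eq_iff]

theorem mem_coe_image_Ico_div_iff {x : 𝕋} {k : ℤ} :
    x ∈ (fun t : ℝ => (t : 𝕋)) '' Ico ((k : ℝ) / p) ((k + 1) / p) ↔ cell p x = k := by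
  constructor
  · rintro ⟨t, ht, rfl⟩
    exact congrArg Int.cast (mem_Ico_div_iff_floor_mul_eq.1 ht)
  · obtain ⟨t, rfl⟩ := QuotientAddGroup.mk_surjective x
    intro (ht : ((⌊p * t⌋ : ℤ) : ZMod p) = k)
    obtain ⟨n, hn⟩ := (ZMod.intCast_eq_intCast_iff_dvd_sub _ _ _).1 ht
    have floor_eq : ⌊p * (t + n)⌋ = k := by
      have mul_add_eq : p * (t + n) = p * t + ((p * n : ℤ) : ℝ) := by
        push_cast
        ring
      rw [mul_add_eq, Int.floor_add_intCast, ← hn, add_sub_cancel]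
    refine ⟨t + n, mem_Ico_div_iff_floor_mul_eq.2 floor_eq, ?_⟩
    have coe_n : ((n : ℝ) : 𝕋) = 0 := (AddCircle.coe_eq_zero_iff 1).2 ⟨n, by simp⟩
    simp only [AddCircle.coe_add, coe_n, add_zero]

theorem sub_toAddCircle_mem_coe_image_Ico_iff {x : 𝕋} {k : ZMod p} :
    x - ZMod.toAddCircle k ∈ (fun t : ℝ => (t : 𝕋)) '' Ico 0 (1 / p) ↔ cell p x = k := by
  have mem_zero_iff (y : 𝕋) : y ∈ (fun t : ℝ => (t : 𝕋)) '' Ico 0 (1 / p) ↔ cell p y = 0 := by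
    simpa using mem_coe_image_Ico_div_iff (p := p) (x := y) (k := 0)
  rw [mem_zero_iff, sub_eq_neg_add, ← map_neg, cell_toAddCircle_add, neg_add_eq_zero, eq_comm]

theorem PMeasurable.mem_iff_cell_mem_discretize {A : Set 𝕋} (hA : PMeasurable p A) {x : 𝕋} :
    x ∈ A ↔ cell p x ∈ discretize p A := by
  obtain ⟨s, rfl⟩ := hA
  have mem_union_iff (y : 𝕋) : (y ∈ ⋃ k ∈ s, (fun t : ℝ => (t : 𝕋)) ''
      Ico ((k : ℝ) / p) (((k : ℝ) + 1) / p)) ↔ ∃ k ∈ s, cell p y = (k : ℕ) := by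
    simp only [mem_iUnion, exists_prop]
    refine exists_congr fun k => and_congr_right fun _ => ?_
    simpa only [Int.cast_natCast] using mem_coe_image_Ico_div_iff (p := p) (x := y) (k := (k : ℕ))
  rw [discretize, mem_ofPred_eq, mem_union_iff, mem_union_iff, ← ZMod.toAddCircle_apply,
    cell_toAddCircle]

end Cell

section CellIndex

variable {r m : ℕ} {L : Matrix (Fin r) (Fin m) ℤ} {p : ℕ}

/-- The index `j ∈ ℤ_p^m` of the cube `j/p + [0,1/p)^m` in which a point of `ker_𝕋 L` lies, so that
the fibre over `j` is `(j/p + [0,1/p)^m) ∩ ker_𝕋 L`. -/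
def cellIndex (p : ℕ) (x : kerT L) : Fin m → ZMod p :=
  cell p ∘ (x : Fin m → 𝕋)

theorem measurableSet_cellIndex_preimage_singleton (j : Fin m → ZMod p) :
    MeasurableSet ((cellIndex p : kerT L → _) ⁻¹' {j}) := by
  have preimage_eq : (cellIndex p : kerT L → _) ⁻¹' {j} =
      ⋂ i, (fun x : kerT L => (x : Fin m → 𝕋) i) ⁻¹' (cell p ⁻¹' {j i}) := by
    ext x
    simp [cellIndex, funext_iff]
  rw [preimage_eq]
  exact .iInter fun i => (measurable_pi_apply i).comp measurable_subtype_coe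
    (measurableSet_cell_preimage p {j i})

theorem abs_Lhom_apply_le {t : Fin m → ℝ} (ht : ∀ l, |t l| ≤ 1) (i : Fin r) :
    |Lhom L ℝ t i| ≤ ∑ l, |(L i l : ℝ)| :=
  calc |∑ l, L i l • t l| ≤ ∑ l, |L i l • t l| := Finset.abs_sum_le_sum_abs _ _
    _ ≤ ∑ l, |(L i l : ℝ)| := Finset.sum_le_sum fun l _ => by
      rw [zsmul_eq_mul, abs_mul]
      exact mul_le_of_le_one_right (abs_nonneg _) (ht l)

theorem exists_Lhom_eq_intCast_of_coe_mem_kerT {t : Fin m → ℝ}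
    (ht : (fun l => (t l : 𝕋)) ∈ kerT L) : ∃ n : Fin r → ℤ, Lhom L ℝ t = fun i => (n i : ℝ) := by
  have coe_Lhom (i : Fin r) : ((Lhom L ℝ t i : ℝ) : 𝕋) = 0 :=
    (congrFun (Lhom_comp L (QuotientAddGroup.mk' (AddSubgroup.zmultiples (1 : ℝ))) t) i).symm.trans
      (congrFun ht i)
  choose n hn using fun i => (AddCircle.coe_eq_zero_iff (1 : ℝ)).1 (coe_Lhom i)
  exact ⟨n, funext fun i => by simpa using (hn i).symm⟩

theorem abs_Lhom_floor_sub_le {t : Fin m → ℝ} {k : Fin r → ℤ}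
    (ht : Lhom L ℝ t = fun i => (k i : ℝ)) (i : Fin r) :
    |Lhom L ℤ (fun l => ⌊t l⌋) i - k i| ≤ ∑ l, |L i l| := by
  have Lhom_fract : Lhom L ℝ (fun l => Int.fract (t l)) =
      fun i => (k i : ℝ) - Lhom L ℤ (fun l => ⌊t l⌋) i := by
    change Lhom L ℝ (t - Int.castAddHom ℝ ∘ fun l => ⌊t l⌋) = _
    rw [map_sub, Lhom_comp, ht]
    rfl
  have abs_fract_le (l : Fin m) : |Int.fract (t l)| ≤ 1 := by
    rw [Int.abs_fract]
    exact (Int.fract_lt_one _).le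
  have abs_cast_le := abs_Lhom_apply_le (L := L) abs_fract_le i
  rw [Lhom_fract, abs_sub_comm] at abs_cast_le
  exact_mod_cast abs_cast_le

/-- The box of all `w ∈ ℤ^r` with `|w_i| ≤ ∑_l |L_il|` for each `i`. Its size bounds the number of
cosets of `ker_{ℤ_p} L` that contain the index of a point of `ker_𝕋 L`. -/
def rowSumBox (L : Matrix (Fin r) (Fin m) ℤ) : Finset (Fin r → ℤ) :=
  Finset.Icc (fun i => -∑ l, |L i l|) (fun i => ∑ l, |L i l|)

theorem Lhom_cellIndex_mem_image_rowSumBox (x : kerT L) :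
    Lhom L (ZMod p) (cellIndex p x) ∈ (rowSumBox L).image fun w i => (w i : ZMod p) := by
  obtain ⟨x, hx⟩ := x
  choose t ht using fun l => QuotientAddGroup.mk_surjective (x l)
  obtain rfl : (fun l => (t l : 𝕋)) = x := funext ht
  obtain ⟨n, hn⟩ := exists_Lhom_eq_intCast_of_coe_mem_kerT hx
  have Lhom_mul : Lhom L ℝ (fun l => p * t l) = fun i => ((p * n i : ℤ) : ℝ) := by
    change Lhom L ℝ (AddMonoidHom.mulLeft (p : ℝ) ∘ t) = _
    rw [Lhom_comp, hn]
    ext i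
    simp
  have abs_le_rowSum := abs_Lhom_floor_sub_le Lhom_mul
  refine Finset.mem_image.2 ⟨fun i => Lhom L ℤ (fun l => ⌊p * t l⌋) i - p * n i, Finset.mem_Icc.2
    ⟨fun i => (abs_le.1 (abs_le_rowSum i)).1, fun i => (abs_le.1 (abs_le_rowSum i)).2⟩, ?_⟩
  change _ = Lhom L (ZMod p) (Int.castAddHom (ZMod p) ∘ fun l => ⌊p * t l⌋)
  rw [Lhom_comp]
  ext i
  simp

variable [NeZero p]

theorem discPt_eq_toAddCircle_comp (j : Fin m → ℤ) :
    discPt m p j = ZMod.toAddCircle ∘ fun i => (j i : ZMod p) :=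
  funext fun i => (ZMod.toAddCircle_intCast (j i)).symm

theorem setOf_sub_discPt_mem_cube0 (j : Fin m → ℤ) :
    {x : kerT L | (x : Fin m → 𝕋) - discPt m p j ∈ cube0 m p} =
      cellIndex p ⁻¹' {fun i => (j i : ZMod p)} := by
  ext x
  rw [mem_ofPred_eq, discPt_eq_toAddCircle_comp, cube0, mem_univ_pi, mem_preimage,
    mem_singleton_iff, funext_iff]
  exact forall_congr' fun i => sub_toAddCircle_mem_coe_image_Ico_iff

theorem toAddCircle_comp_mem_kerT {h : Fin m → ZMod p} (hh : h ∈ kerZ L p) :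
    ZMod.toAddCircle ∘ h ∈ kerT L := by
  change Lhom L 𝕋 (ZMod.toAddCircle ∘ h) = 0
  rw [Lhom_comp, AddMonoidHom.mem_ker.1 hh]
  exact funext fun _ => map_zero _

variable {μ : Measure (kerT L)}

theorem measure_cellIndex_preimage_add [μ.IsAddLeftInvariant] {h : Fin m → ZMod p}
    (hh : h ∈ kerZ L p) (j : Fin m → ZMod p) :
    μ (cellIndex p ⁻¹' {h + j}) = μ (cellIndex p ⁻¹' {j}) := by
  have preimage_eq : (fun x => (⟨_, toAddCircle_comp_mem_kerT hh⟩ : kerT L) + x) ⁻¹'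
      (cellIndex p ⁻¹' {h + j}) = cellIndex p ⁻¹' {j} := by
    ext x
    simp [cellIndex, funext_iff, cell_toAddCircle_add]
  rw [← preimage_eq, measure_preimage_add]

theorem measure_cellIndex_preimage_congr [μ.IsAddLeftInvariant] {j j' : Fin m → ZMod p}
    (hj : Lhom L (ZMod p) j = Lhom L (ZMod p) j') :
    μ (cellIndex p ⁻¹' {j}) = μ (cellIndex p ⁻¹' {j'}) := by
  have sub_mem : j - j' ∈ kerZ L p := by
    rw [kerZ, AddMonoidHom.mem_ker, map_sub, hj, sub_self]
  simpa using measure_cellIndex_preimage_add (μ := μ) sub_mem j'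

theorem measureReal_setOf_forall_mem [IsFiniteMeasure μ] {A : Fin m → Set 𝕋}
    (hA : ∀ i, PMeasurable p (A i)) {T : Finset (Fin m → ZMod p)}
    (hT : ∀ j, j ∈ T ↔ ∀ i, j i ∈ discretize p (A i)) :
    μ.real {x : kerT L | ∀ i, (x : Fin m → 𝕋) i ∈ A i} =
      ∑ j ∈ T, μ.real (cellIndex p ⁻¹' {j}) := by
  have preimage_eq : {x : kerT L | ∀ i, (x : Fin m → 𝕋) i ∈ A i} =
      cellIndex p ⁻¹' (T : Set (Fin m → ZMod p)) := by
    ext x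
    simp [hT, cellIndex, (hA _).mem_iff_cell_mem_discretize]
  rw [preimage_eq,
    sum_measureReal_preimage_singleton T fun j _ => measurableSet_cellIndex_preimage_singleton j]

theorem natCard_kerZ_mul_SZ {B : Fin m → Set (ZMod p)} {T : Finset (Fin m → ZMod p)}
    (hT : ∀ j, j ∈ T ↔ ∀ i, j i ∈ B i) (c : Fin m → ZMod p) :
    Nat.card (kerZ L p) * SZ L p (fun i => {y | y + c i ∈ B i}) =
      (T.filter (Lhom L (ZMod p) · = Lhom L (ZMod p) c)).card := by
  have card_ne_zero : (Nat.card (kerZ L p) : ℝ) ≠ 0 := Nat.cast_ne_zero.2 Nat.card_pos.ne'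
  have add_mem_iff (j : Fin m → ZMod p) : (j ∈ kerZ L p ∧ ∀ i, j i ∈ {y | y + c i ∈ B i}) ↔
      j + c ∈ T.filter (Lhom L (ZMod p) · = Lhom L (ZMod p) c) := by
    simp [hT, kerZ, AddMonoidHom.mem_ker, and_comm]
  rw [SZ, mul_div_cancel₀ _ card_ne_zero, ← Nat.card_eq_finsetCard, Nat.cast_inj]
  exact Nat.card_congr <| (Equiv.subtypeSubtypeEquivSubtypeInter _ _).trans <|
    (Equiv.addRight c).subtypeEquiv add_mem_iff

theorem exists_finset_measureReal_eq_sum_SZ (L : Matrix (Fin r) (Fin m) ℤ) (p : ℕ) [NeZero p]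
    (μ : Measure (kerT L)) [IsFiniteMeasure μ] [μ.IsAddLeftInvariant] :
    ∃ s : Finset (Fin m → ZMod p), s.card ≤ (rowSumBox L).card ∧
      (∀ c ∈ s, 0 < μ (cellIndex p ⁻¹' {c})) ∧
      ∀ A : Fin m → Set 𝕋, (∀ i, PMeasurable p (A i)) →
        μ.real {x : kerT L | ∀ i, (x : Fin m → 𝕋) i ∈ A i} =
          ∑ c ∈ s, Nat.card (kerZ L p) * μ.real (cellIndex p ⁻¹' {c}) *
            SZ L p (fun i => {y | y + c i ∈ discretize p (A i)}) := by
  set weight : (Fin m → ZMod p) → ℝ := fun j => μ.real (cellIndex p ⁻¹' {j})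
  obtain ⟨s, s_subset, hs⟩ := exists_subset_bijOn (Function.support weight) (Lhom L (ZMod p))
  lift s to Finset (Fin m → ZMod p) using s.toFinite
  have s_pos : ∀ c ∈ s, 0 < μ (cellIndex p ⁻¹' {c}) := fun c hc =>
    pos_iff_ne_zero.2 (ENNReal.toReal_ne_zero.1 (s_subset hc)).1
  have Lhom_mem_image : ∀ c ∈ s,
      Lhom L (ZMod p) c ∈ (rowSumBox L).image fun w i => (w i : ZMod p) := by
    intro c hc
    obtain ⟨x, rfl⟩ := nonempty_of_measure_ne_zero (s_pos c hc).ne'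
    exact Lhom_cellIndex_mem_image_rowSumBox x
  refine ⟨s, (Finset.card_le_card_of_injOn _ Lhom_mem_image hs.injOn).trans Finset.card_image_le,
    s_pos, fun A hA => ?_⟩
  set T : Finset (Fin m → ZMod p) := (Set.toFinite {j | ∀ i, j i ∈ discretize p (A i)}).toFinset
  have mem_T (j : Fin m → ZMod p) : j ∈ T ↔ ∀ i, j i ∈ discretize p (A i) := Finite.mem_toFinset _
  have weight_congr (j j') (hj : Lhom L (ZMod p) j = Lhom L (ZMod p) j') : weight j = weight j' :=
    congrArg ENNReal.toReal (measure_cellIndex_preimage_congr hj)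
  rw [measureReal_setOf_forall_mem hA mem_T, sum_eq_sum_card_fiber_mul weight_congr hs T]
  refine Finset.sum_congr rfl fun c _ => ?_
  rw [← natCard_kerZ_mul_SZ mem_T, mul_right_comm]

end CellIndex

theorem main_formula_general {r m : ℕ} (L : Matrix (Fin r) (Fin m) ℤ) :
    ∃ KL : ℕ, ∀ (μL : Measure (kerT L)) [IsFiniteMeasure μL] [μL.IsAddLeftInvariant]
      (p : ℕ) [NeZero p], ∃ K ≤ KL, ∃ jj : Fin K → (Fin m → ℤ),
        (∀ k, discPt m p (jj k) ∈ Jset L p μL) ∧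
        ∀ A : Fin m → Set 𝕋, (∀ i, PMeasurable p (A i)) →
          (μL {x : kerT L | ∀ i, (x : Fin m → 𝕋) i ∈ A i}).toReal =
            ∑ k : Fin K, Nat.card (kerZ L p) *
              (μL {x : kerT L | (x : Fin m → 𝕋) - discPt m p (jj k) ∈ cube0 m p}).toReal *
                SZ L p (fun i => {y : ZMod p | y + ((jj k i : ℤ) : ZMod p) ∈
                  discretize p (A i)}) := by
  refine ⟨(rowSumBox L).card, fun μL _ _ p _ => ?_⟩
  obtain ⟨s, card_s_le, s_pos, hs⟩ := exists_finset_measureReal_eq_sum_SZ L p μL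
  refine ⟨s.card, card_s_le, fun k i => ((s.equivFin.symm k : Fin m → ZMod p) i).cast,
    fun k => ⟨⟨_, rfl⟩, ?_⟩, fun A hA => ?_⟩
  · simpa only [setOf_sub_discPt_mem_cube0, ZMod.intCast_cast, ZMod.cast_id] using
      s_pos _ (s.equivFin.symm k).2
  · simp only [setOf_sub_discPt_mem_cube0, ZMod.intCast_cast, ZMod.cast_id]
    refine (hs A hA).trans ?_
    rw [← Finset.sum_coe_sort s, ← Equiv.sum_comp s.equivFin.symm]
    rfl

/-- **The main discrete decomposition formula.**
Let `L` be an `r × m` integer matrix of full rank `r` and let `μL` be the Haar probability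
measure on `ker_𝕋 L`. There is a bound `K_L` depending only on `L` such that for every
sufficiently large prime `p` and all `p`-measurable sets `A₁, …, A_m ⊆ 𝕋` there are
`j₁/p, …, j_K/p ∈ J(L,p)` with `K ≤ K_L` and
`S_{L,𝕋}(A₁, …, A_m) = ∑_{k=1}^K λ_k ⬝ S_{L,ℤ_p}(A₁' - j_k(1), …, A_m' - j_k(m))`,
where `λ_k = p^{m-r} μ_{L,𝕋}((j_k/p + [0,1/p)^m) ∩ ker_𝕋 L)`. -/
theorem main_formula {r m : ℕ} (L : Matrix (Fin r) (Fin m) ℤ)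
    (hrank : (L.map (Int.cast : ℤ → ℚ)).rank = r)
    (μL : Measure (kerT L)) (hHaar : μL.IsAddHaarMeasure) (hprob : IsProbabilityMeasure μL) :
    ∃ KL : ℕ, ∃ p₀ : ℕ, ∀ p : ℕ, p.Prime → p₀ ≤ p →
      ∀ A : Fin m → Set 𝕋, (∀ i, PMeasurable p (A i)) →
        ∃ K : ℕ, K ≤ KL ∧
          ∃ jj : Fin K → (Fin m → ℤ),
            (∀ k, discPt m p (jj k) ∈ Jset L p μL) ∧
            (μL {x : kerT L | ∀ i, (x : Fin m → 𝕋) i ∈ A i}).toReal =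
              ∑ k : Fin K, lamVal L p μL (jj k) *
                SZ L p (fun i => {y : ZMod p | y + ((jj k i : ℤ) : ZMod p) ∈
                  discretize p (A i)}) := by
  obtain ⟨p₀, hp₀⟩ := exists_forall_prime_natCard_kerZ_eq hrank
  obtain ⟨KL, hKL⟩ := main_formula_general L
  refine ⟨KL, p₀, fun p hp hpp₀ A hA => ?_⟩
  have : NeZero p := ⟨hp.ne_zero⟩
  obtain ⟨K, hK, jj, hjj, hsum⟩ := hKL μL p
  exact ⟨K, hK, jj, hjj, by simpa [lamVal, hp₀ p hp hpp₀] using hsum A hA⟩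
end
end
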